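/- arXiv:2601.10941 — 5 statements merged into one kernel-verified Lean document; each statement's English description precedes it below -/
import Mathlib

section
/- Under assumptions (I1)–(I4), let λ ∈ (λ_n, λ_{n+1}) and let u ∈ NP_λ. Then J_λ(u) > J_λ(w) for every w ∈ F_n(u)⁺ with w ≠ u; that is, u is the unique, strict global maximizer of the restriction of J_λ to F_n(u)⁺. -/
open Filter Topology Set
open scoped InnerProductSpace

/- Abstract setting: `E = D(A^{1/2})` is a real Hilbert space in which the rescaled
eigenfunctions `ζ_k / √(1+λ_k)` form a Hilbert basis (encoded by `hON` and `hdense` below);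
the `H`-inner product of `u, v ∈ E` is recovered as `∑ₖ ⟨u,ζ_k⟩_H ⟨v,ζ_k⟩_H`, where
`⟨u,ζ_k⟩_H = ⟨u,ζ_k⟩_E / (1+λ_k)`. -/

variable {E : Type*} [NormedAddCommGroup E] [InnerProductSpace ℝ E] [CompleteSpace E]

/-- The `H`-inner-product coefficient `⟨u, ζ_k⟩_H = ⟨u, ζ_k⟩_E / (1 + λ_k)`. -/
noncomputable def coefH (lam : ℕ → ℝ) (ζ : ℕ → E) (u : E) (k : ℕ) : ℝ :=
  ⟪u, ζ k⟫_ℝ / (1 + lam k)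

/-- The square of the `H`-norm: `‖u‖_H² = ∑ₖ ⟨u,ζ_k⟩_H²`. -/
noncomputable def normHsq (lam : ℕ → ℝ) (ζ : ℕ → E) (u : E) : ℝ :=
  ∑' k, (coefH lam ζ u k) ^ 2

/-- The symmetric bilinear form `q_λ(u,v) = ∑ₖ (λ_k − λ) ⟨u,ζ_k⟩_H ⟨v,ζ_k⟩_H`. -/
noncomputable def qForm (lam : ℕ → ℝ) (ζ : ℕ → E) (lambda : ℝ) (u v : E) : ℝ :=
  ∑' k, (lam k - lambda) * (coefH lam ζ u k * coefH lam ζ v k)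

/-- The action functional `J_λ(u) = ½ q_λ(u) − I(u)`. -/
noncomputable def Jfun (lam : ℕ → ℝ) (ζ : ℕ → E) (I : E → ℝ) (lambda : ℝ) (u : E) : ℝ :=
  qForm lam ζ lambda u u / 2 - I u

/-- `E_n`, the span of the eigenfunctions `ζ_0, …, ζ_n` (the first `n+1` of them). -/
noncomputable def Esub (ζ : ℕ → E) (n : ℕ) : Submodule ℝ E :=
  Submodule.span ℝ (ζ '' {k : ℕ | k ≤ n})

/-- `F_n(u) = E_n ⊕ ℝ u`. -/
noncomputable def Fsub (ζ : ℕ → E) (n : ℕ) (u : E) : Submodule ℝ E :=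
  Esub ζ n ⊔ Submodule.span ℝ {u}

/-- `F_n(u)⁺ = E_n ⊕ ℝ⁺ u = {v + t u : v ∈ E_n, t > 0}`. -/
def FsubPlus (ζ : ℕ → E) (n : ℕ) (u : E) : Set E :=
  {w | ∃ v ∈ Esub ζ n, ∃ t : ℝ, 0 < t ∧ w = v + t • u}

/-- The derivative of `J_λ` at `u` applied to `w`: `J_λ'(u)[w] = q_λ(u,w) − I'(u)[w]`. -/
noncomputable def Jderiv (lam : ℕ → ℝ) (ζ : ℕ → E) (I' : E → E →L[ℝ] ℝ)
    (lambda : ℝ) (u w : E) : ℝ :=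
  qForm lam ζ lambda u w - I' u w

/-- The Nehari–Pankov set `NP_λ = {u ∈ E ∖ E_n : J_λ'(u)|_{F_n(u)} = 0}`. -/
def NehariPankov (lam : ℕ → ℝ) (ζ : ℕ → E) (I' : E → E →L[ℝ] ℝ)
    (n : ℕ) (lambda : ℝ) : Set E :=
  {u | u ∉ Esub ζ n ∧ ∀ w ∈ Fsub ζ n u, Jderiv lam ζ I' lambda u w = 0}

/-- The ground-state level `c_λ = inf_{NP_λ} J_λ`. -/
noncomputable def clevel (lam : ℕ → ℝ) (ζ : ℕ → E) (I : E → ℝ) (I' : E → E →L[ℝ] ℝ)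
    (n : ℕ) (lambda : ℝ) : ℝ :=
  sInf (Jfun lam ζ I lambda '' NehariPankov lam ζ I' n lambda)

/-- The set `Q_λ` of minimizers of `J_λ` on `NP_λ`. -/
def Qset (lam : ℕ → ℝ) (ζ : ℕ → E) (I : E → ℝ) (I' : E → E →L[ℝ] ℝ)
    (n : ℕ) (lambda : ℝ) : Set E :=
  {u | u ∈ NehariPankov lam ζ I' n lambda ∧
    Jfun lam ζ I lambda u = clevel lam ζ I I' n lambda}

/-- `E_n^⊥ = {w ∈ E : ⟨w, ζ_k⟩_H = 0 for k = 0, …, n}`. -/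
def EsubPerp (lam : ℕ → ℝ) (ζ : ℕ → E) (n : ℕ) : Set E :=
  {w | ∀ k ≤ n, coefH lam ζ w k = 0}

section helpers

theorem npaux_summable_sq {E : Type*} [NormedAddCommGroup E] [InnerProductSpace ℝ E]
    (lam : ℕ → ℝ) (ζ : ℕ → E) (hlam_nonneg : ∀ k, 0 ≤ lam k)
    (hON : ∀ j k, ⟪ζ j, ζ k⟫_ℝ = if j = k then 1 + lam k else 0)
    (lambda : ℝ) (u : E) :
    Summable (fun k => (lam k - lambda) * (coefH lam ζ u k * coefH lam ζ u k)) := by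
  have hpos : ∀ k, 0 < 1 + lam k := fun k => by linarith [hlam_nonneg k]
  have ho : Orthonormal ℝ (fun k => (Real.sqrt (1 + lam k))⁻¹ • ζ k) := by
    rw [orthonormal_iff_ite]
    intro i j
    rw [real_inner_smul_left, real_inner_smul_right, hON]
    split_ifs with hij
    · subst hij
      have h1 := Real.mul_self_sqrt (hpos i).le
      have h2 := (Real.sqrt_pos.2 (hpos i)).ne'
      field_simp
      nlinarith
    · simp
  have hs := (ho.inner_products_summable u).mul_left (1 + |lambda|)
  refine Summable.of_norm_bounded hs ?_
  intro k
  have h1 : ‖⟪(Real.sqrt (1 + lam k))⁻¹ • ζ k, u⟫_ℝ‖ ^ 2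
      = (1 + lam k) * (coefH lam ζ u k * coefH lam ζ u k) := by
    rw [real_inner_smul_left, real_inner_comm, Real.norm_eq_abs, sq_abs, mul_pow, inv_pow,
      Real.sq_sqrt (hpos k).le, coefH]
    have := (hpos k).ne'
    field_simp
  rw [h1, Real.norm_eq_abs, abs_mul, abs_of_nonneg (mul_self_nonneg (coefH lam ζ u k)),
    ← mul_assoc (1 + |lambda|)]
  have h0 : (0:ℝ) ≤ coefH lam ζ u k * coefH lam ζ u k := mul_self_nonneg _
  refine mul_le_mul_of_nonneg_right ?_ h0
  have h3 := abs_nonneg lambda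
  have h4 := le_abs_self lambda
  have h5 := neg_abs_le lambda
  have h6 := mul_nonneg h3 (hlam_nonneg k)
  rw [abs_le]
  constructor <;> nlinarith [hlam_nonneg k]

theorem npaux_coef_zero {E : Type*} [NormedAddCommGroup E] [InnerProductSpace ℝ E]
    (lam : ℕ → ℝ) (ζ : ℕ → E)
    (hON : ∀ j k, ⟪ζ j, ζ k⟫_ℝ = if j = k then 1 + lam k else 0)
    (n : ℕ) (v : E) (hv : v ∈ Esub ζ n) (k : ℕ) (hk : n < k) : coefH lam ζ v k = 0 := by
  have : ⟪v, ζ k⟫_ℝ = 0 := by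
    unfold Esub at hv
    induction hv using Submodule.span_induction with
    | mem x hx =>
      obtain ⟨j, hj, rfl⟩ := hx
      have hj' : j ≤ n := hj
      rw [hON, if_neg (by omega)]
    | zero => simp
    | add x y _ _ hx hy => rw [inner_add_left, hx, hy, add_zero]
    | smul a x _ hx => rw [real_inner_smul_left, hx, mul_zero]
  simp [coefH, this]

theorem npaux_eq_zero {E : Type*} [NormedAddCommGroup E] [InnerProductSpace ℝ E]
    (lam : ℕ → ℝ) (ζ : ℕ → E) (hlam_nonneg : ∀ k, 0 ≤ lam k)
    (n : ℕ) (v : E) (hv : v ∈ Esub ζ n) (h : ∀ k ≤ n, coefH lam ζ v k = 0) : v = 0 := by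
  have key : ∀ x ∈ Esub ζ n, ⟪v, x⟫_ℝ = 0 := by
    intro x hx
    unfold Esub at hx
    induction hx using Submodule.span_induction with
    | mem x hx =>
      obtain ⟨j, hj, rfl⟩ := hx
      have := h j hj
      have hp : 1 + lam j ≠ 0 := by linarith [hlam_nonneg j]
      unfold coefH at this
      rw [div_eq_zero_iff] at this
      exact this.resolve_right hp
    | zero => simp
    | add x y _ _ hx hy => rw [inner_add_right, hx, hy, add_zero]
    | smul a x _ hx => rw [real_inner_smul_right, hx, mul_zero]
  exact inner_self_eq_zero.1 (key v hv)

end helpers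

/-- Every `u ∈ NP_λ` is the unique strict global maximizer of `J_λ`
on `F_n(u)⁺`. -/
theorem nehari_pankov_unique_max {E : Type*} [NormedAddCommGroup E]
    [InnerProductSpace ℝ E] [CompleteSpace E]
    (lam : ℕ → ℝ) (ζ : ℕ → E)
    (hlam_mono : Monotone lam) (hlam_nonneg : ∀ k, 0 ≤ lam k)
    (hlam_top : Tendsto lam atTop atTop)
    (hON : ∀ j k, ⟪ζ j, ζ k⟫_ℝ = if j = k then 1 + lam k else 0)
    (hdense : (Submodule.span ℝ (Set.range ζ)).topologicalClosure = ⊤)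
    (I : E → ℝ) (I' : E → E →L[ℝ] ℝ)
    (hIderiv : ∀ u, HasFDerivAt I (I' u) u) (hIderiv_cont : Continuous I')
    (hI1 : ∀ (u : ℕ → E) (a : E),
      (∀ φ : E →L[ℝ] ℝ, Tendsto (fun j => φ (u j)) atTop (𝓝 (φ a))) →
      Tendsto (fun j => I (u j)) atTop (𝓝 (I a)))
    (hI2 : I 0 = 0 ∧ ∀ u : E, u ≠ 0 → 0 < I u)
    (hI3mono : ∀ u : E, u ≠ 0 → MonotoneOn (fun t : ℝ => I (t • u) / t ^ 2) (Ioi 0))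
    (hI3zero : ∀ u : E, u ≠ 0 → Tendsto (fun t : ℝ => I (t • u) / t ^ 2) (𝓝[>] 0) (𝓝 0))
    (hI3top : ∀ u : E, u ≠ 0 → Tendsto (fun t : ℝ => I (t • u) / t ^ 2) atTop atTop)
    (hI4 : ∀ u : E, u ≠ 0 → ∀ v : E, ∀ s : ℝ, -1 ≤ s →
      I u - I ((1 + s) • u + v) + I' u ((s * (s / 2 + 1)) • u + (1 + s) • v) ≤ 0)
    (hI4strict : ∀ u : E, u ≠ 0 → ∀ s : ℝ, -1 ≤ s → s ≠ 0 →
      I u - I ((1 + s) • u) + I' u ((s * (s / 2 + 1)) • u) < 0)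
    (n : ℕ)
    (lambda : ℝ) (hlambda : lambda ∈ Ioo (lam n) (lam (n + 1)))
    (u : E) (hu : u ∈ NehariPankov lam ζ I' n lambda) :
    ∀ w ∈ FsubPlus ζ n u, w ≠ u → Jfun lam ζ I lambda w < Jfun lam ζ I lambda u := by
  rintro w ⟨v, hv, t, ht, rfl⟩ hne
  obtain ⟨huE, hcrit⟩ := hu
  have hu0 : u ≠ 0 := by
    rintro rfl
    exact huE (Submodule.zero_mem _)
  have hsuppL : ∀ x : E, Summable
      (fun k => (lam k - lambda) * (coefH lam ζ x k * coefH lam ζ v k)) := by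
    intro x
    refine summable_of_ne_finset_zero (s := Finset.range (n + 1)) ?_
    intro k hk
    rw [npaux_coef_zero lam ζ hON n v hv k (by simpa using hk)]
    simp
  have hsu := npaux_summable_sq lam ζ hlam_nonneg hON lambda u
  have hlin : ∀ a b : ℝ, qForm lam ζ lambda u (a • u + b • v)
      = a * qForm lam ζ lambda u u + b * qForm lam ζ lambda u v := by
    intro a b
    unfold qForm
    rw [← tsum_mul_left, ← tsum_mul_left, ← (hsu.mul_left a).tsum_add ((hsuppL u).mul_left b)]
    congr 1
    funext k
    simp only [coefH, inner_add_left, real_inner_smul_left]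
    ring
  have hquad : qForm lam ζ lambda (v + t • u) (v + t • u)
      = t ^ 2 * qForm lam ζ lambda u u + 2 * t * qForm lam ζ lambda u v
        + qForm lam ζ lambda v v := by
    unfold qForm
    rw [← tsum_mul_left, ← tsum_mul_left,
      ← (hsu.mul_left (t ^ 2)).tsum_add ((hsuppL u).mul_left (2 * t)),
      ← ((hsu.mul_left (t ^ 2)).add ((hsuppL u).mul_left (2 * t))).tsum_add (hsuppL v)]
    congr 1
    funext k
    simp only [coefH, inner_add_left, real_inner_smul_left]
    ring
  have hmem : ((t - 1) * ((t - 1) / 2 + 1)) • u + t • v ∈ Fsub ζ n u := by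
    unfold Fsub
    refine Submodule.add_mem _ ?_ ?_
    · exact Submodule.smul_mem _ _
        (Submodule.mem_sup_right (Submodule.mem_span_singleton_self u))
    · exact Submodule.smul_mem _ _ (Submodule.mem_sup_left hv)
  have hd := hcrit _ hmem
  unfold Jderiv at hd
  rw [hlin] at hd
  have h4 := hI4 u hu0 v (t - 1) (by linarith)
  have ht1 : 1 + (t - 1) = t := by ring
  rw [ht1, add_comm (t • u) v] at h4
  unfold Jfun
  rw [hquad]
  by_cases hv0 : v = 0
  · have ht' : t - 1 ≠ 0 := by
      intro h
      apply hne
      have : t = 1 := by linarith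
      simp [hv0, this]
    have h5 := hI4strict u hu0 (t - 1) (by linarith) ht'
    rw [ht1] at h5
    subst hv0
    have hz : ∀ x : E, qForm lam ζ lambda x 0 = 0 := by
      intro x
      simp [qForm, coefH]
    rw [hz, hz]
    rw [hz] at hd
    simp only [smul_zero, add_zero, zero_add] at hd h5 ⊢
    nlinarith
  · have hneg : qForm lam ζ lambda v v < 0 := by
      have hle : ∀ k, (lam k - lambda) * (coefH lam ζ v k * coefH lam ζ v k) ≤ 0 := by
        intro k
        rcases le_or_gt k n with hk | hk
        · have := hlam_mono hk
          exact mul_nonpos_of_nonpos_of_nonneg (by linarith [hlambda.1]) (mul_self_nonneg _)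
        · rw [npaux_coef_zero lam ζ hON n v hv k hk]
          simp
      obtain ⟨k, hk, hkne⟩ : ∃ k, k ≤ n ∧ coefH lam ζ v k ≠ 0 := by
        by_contra hcon
        push Not at hcon
        exact hv0 (npaux_eq_zero lam ζ hlam_nonneg n v hv hcon)
      have hlt : (lam k - lambda) * (coefH lam ζ v k * coefH lam ζ v k) < 0 := by
        have := hlam_mono hk
        exact mul_neg_of_neg_of_pos (by linarith [hlambda.1]) (mul_self_pos.2 hkne)
      have := Summable.tsum_lt_tsum hle hlt (hsuppL v) summable_zero
      simpa [qForm] using this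
    nlinarith
end

section
/- Under assumptions (I1)–(I4), let λ ∈ (λ_n, λ_{n+1}). For every ũ ∈ E∖E_n there exists a unique u ∈ F_n(ũ)⁺ maximizing J_λ over F_n(ũ)⁺, and this maximizer u belongs to NP_λ. Consequently, inf_{u ∈ NP_λ} J_λ(u) = inf_{ũ ∈ E∖E_n} sup_{w ∈ F_n(ũ)⁺} J_λ(w). -/
open Filter Topology Set
open scoped InnerProductSpace

/- Abstract setting: `E = D(A^{1/2})` is a real Hilbert space in which the rescaled
eigenfunctions `ζ_k / √(1+λ_k)` form a Hilbert basis (encoded by `hON` and `hdense` below);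
the `H`-inner product of `u, v ∈ E` is recovered as `∑ₖ ⟨u,ζ_k⟩_H ⟨v,ζ_k⟩_H`, where
`⟨u,ζ_k⟩_H = ⟨u,ζ_k⟩_E / (1+λ_k)`. -/

variable {E : Type*} [NormedAddCommGroup E] [InnerProductSpace ℝ E] [CompleteSpace E]

section Helpers

theorem aux_smul_mem_pos {E : Type*} [NormedAddCommGroup E] [InnerProductSpace ℝ E]
    (Q : E →ₗ[ℝ] E →ₗ[ℝ] ℝ) (F : Submodule ℝ E) [FiniteDimensional ℝ F] :
    Continuous (fun x : F => Q (x : E) (x : E)) := by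
  let f : F →ₗ[ℝ] (F →L[ℝ] ℝ) :=
    (LinearMap.toContinuousLinearMap : (F →ₗ[ℝ] ℝ) ≃ₗ[ℝ] (F →L[ℝ] ℝ)).toLinearMap ∘ₗ
      (LinearMap.domRestrict₁₂ Q F F)
  have hf : Continuous f := f.continuous_of_finiteDimensional
  exact hf.clm_apply continuous_id

/-- Anti-coercivity on finite-dimensional subspaces. -/
theorem aux_anticoercive {E : Type*} [NormedAddCommGroup E] [InnerProductSpace ℝ E]
    (Q : E →ₗ[ℝ] E →ₗ[ℝ] ℝ) (F : Submodule ℝ E) [FiniteDimensional ℝ F]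
    (I : E → ℝ) (hIc : Continuous I)
    (hI3mono : ∀ u : E, u ≠ 0 → MonotoneOn (fun t : ℝ => I (t • u) / t ^ 2) (Ioi 0))
    (hI3top : ∀ u : E, u ≠ 0 → Tendsto (fun t : ℝ => I (t • u) / t ^ 2) atTop atTop) :
    ∃ R : ℝ, ∀ x ∈ F, R < ‖x‖ → Q x x / 2 - I x < 0 := by
  have hQc := aux_smul_mem_pos Q F
  have hS : IsCompact (Metric.sphere (0 : F) 1) := isCompact_sphere 0 1
  let U : ℕ → Set F := fun m => {x | Q (x : E) x / 2 < I (((m : ℝ) + 1) • (x : E)) / ((m : ℝ) + 1) ^ 2}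
  have hUo : ∀ m, IsOpen (U m) := by
    intro m
    apply isOpen_lt (hQc.div_const 2)
    apply Continuous.div_const
    exact hIc.comp (continuous_subtype_val.const_smul ((m : ℝ) + 1))
  have hne : ∀ x ∈ Metric.sphere (0 : F) 1, (x : E) ≠ 0 := by
    intro x hx h
    have : x = 0 := Subtype.ext h
    simp [this] at hx
  have hcov : Metric.sphere (0 : F) 1 ⊆ ⋃ m, U m := by
    intro x hx
    have h1 := (hI3top x (hne x hx)).eventually (eventually_gt_atTop (Q (x : E) x / 2))
    have h2 : Tendsto (fun m : ℕ => (m : ℝ) + 1) atTop atTop :=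
      tendsto_atTop_add_const_right _ _ tendsto_natCast_atTop_atTop
    obtain ⟨m, hm⟩ := (h2.eventually h1).exists
    exact mem_iUnion.2 ⟨m, hm⟩
  obtain ⟨T, hT⟩ := hS.elim_finite_subcover U hUo hcov
  refine ⟨∑ m ∈ T, ((m : ℝ) + 1), fun x hxF hx => ?_⟩
  have hR0 : 0 ≤ ∑ m ∈ T, ((m : ℝ) + 1) := Finset.sum_nonneg fun i _ => by positivity
  have hpos : 0 < ‖x‖ := lt_of_le_of_lt hR0 hx
  let y : F := ⟨‖x‖⁻¹ • x, F.smul_mem _ hxF⟩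
  have hy : y ∈ Metric.sphere (0 : F) 1 := by
    rw [mem_sphere_zero_iff_norm]
    change ‖‖x‖⁻¹ • x‖ = 1
    rw [norm_smul, norm_inv, norm_norm, inv_mul_cancel₀ hpos.ne']
  obtain ⟨m, hmT, hm⟩ := mem_iUnion₂.1 (hT hy)
  have hmR : (m : ℝ) + 1 ≤ ∑ m ∈ T, ((m : ℝ) + 1) :=
    Finset.single_le_sum (f := fun m : ℕ => (m : ℝ) + 1) (fun i _ => by positivity) hmT
  have hm1 : (0 : ℝ) < (m : ℝ) + 1 := by positivity
  have hmono := hI3mono y (hne y hy) (a := (m : ℝ) + 1) (b := ‖x‖) hm1 hpos (by linarith)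
  have hxy : ‖x‖ • (y : E) = x := by
    change ‖x‖ • (‖x‖⁻¹ • x) = x
    rw [smul_smul, mul_inv_cancel₀ hpos.ne', one_smul]
  simp only [hxy] at hmono
  have hlt : Q (y : E) y / 2 < I x / ‖x‖ ^ 2 := lt_of_lt_of_le hm hmono
  have hQx : Q x x = ‖x‖ ^ 2 * Q (y : E) y := by
    conv_lhs => rw [← hxy]
    simp only [map_smul, LinearMap.smul_apply, smul_eq_mul]
    ring
  rw [lt_div_iff₀ (by positivity)] at hlt
  rw [hQx]
  linarith

/-- Strict maximality of constrained critical points. -/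
theorem aux_strict {E : Type*} [NormedAddCommGroup E] [InnerProductSpace ℝ E]
    (Q : E →ₗ[ℝ] E →ₗ[ℝ] ℝ) (hsymm : ∀ u v, Q u v = Q v u)
    (V : Submodule ℝ E) (hneg : ∀ v ∈ V, v ≠ 0 → Q v v < 0)
    (I : E → ℝ) (I' : E → E →L[ℝ] ℝ)
    (hI4 : ∀ u : E, u ≠ 0 → ∀ v : E, ∀ s : ℝ, -1 ≤ s →
      I u - I ((1 + s) • u + v) + I' u ((s * (s / 2 + 1)) • u + (1 + s) • v) ≤ 0)
    (hI4strict : ∀ u : E, u ≠ 0 → ∀ s : ℝ, -1 ≤ s → s ≠ 0 →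
      I u - I ((1 + s) • u) + I' u ((s * (s / 2 + 1)) • u) < 0)
    (u : E) (hu : u ∉ V) (hcrit : ∀ w ∈ V ⊔ Submodule.span ℝ {u}, Q u w - I' u w = 0)
    (v : E) (hv : v ∈ V) (t : ℝ) (ht : 0 < t) (hw : v + t • u ≠ u) :
    Q (v + t • u) (v + t • u) / 2 - I (v + t • u) < Q u u / 2 - I u := by
  have hu0 : u ≠ 0 := fun h => hu (h ▸ V.zero_mem)
  obtain ⟨s, rfl⟩ : ∃ s, t = 1 + s := ⟨t - 1, by ring⟩
  have hc := hcrit ((s * (s / 2 + 1)) • u + (1 + s) • v)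
    (Submodule.add_mem _
      (Submodule.smul_mem _ _ (Submodule.mem_sup_right (Submodule.mem_span_singleton_self u)))
      (Submodule.smul_mem _ _ (Submodule.mem_sup_left hv)))
  have h4 := hI4 u hu0 v s (by linarith)
  rw [add_comm v]
  by_cases hv0 : v = 0
  · subst hv0
    have hs : s ≠ 0 := by
      rintro rfl
      simp at hw
    have h4s := hI4strict u hu0 s (by linarith) hs
    simp only [smul_zero, add_zero] at hc ⊢
    simp only [map_smul, LinearMap.smul_apply, smul_eq_mul] at hc h4s ⊢
    nlinarith
  · have hq := hneg v hv hv0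
    have hs := hsymm v u
    simp only [map_smul, map_add, LinearMap.add_apply, LinearMap.smul_apply, smul_eq_mul] at hc h4 ⊢
    rw [hs]
    nlinarith

/-- A maximizer on the half-space is a constrained critical point. -/
theorem aux_crit {E : Type*} [NormedAddCommGroup E] [InnerProductSpace ℝ E]
    (Q : E →ₗ[ℝ] E →ₗ[ℝ] ℝ) (hsymm : ∀ u v, Q u v = Q v u)
    (V : Submodule ℝ E)
    (I : E → ℝ) (I' : E → E →L[ℝ] ℝ) (hIderiv : ∀ u, HasFDerivAt I (I' u) u)
    (a v : E) (hv : v ∈ V) (t : ℝ) (ht : 0 < t)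
    (hmax : ∀ w ∈ {w | ∃ v ∈ V, ∃ t : ℝ, 0 < t ∧ w = v + t • a},
      Q w w / 2 - I w ≤ Q (v + t • a) (v + t • a) / 2 - I (v + t • a)) :
    ∀ w ∈ V ⊔ Submodule.span ℝ {v + t • a}, Q (v + t • a) w - I' (v + t • a) w = 0 := by
  intro w hw
  obtain ⟨y, hy, z, hz, rfl⟩ := Submodule.mem_sup.1 hw
  obtain ⟨c, rfl⟩ := Submodule.mem_span_singleton.1 hz
  set u := v + t • a with hu
  set w := y + c • u with hwdef
  let g : ℝ → ℝ := fun r => Q (u + r • w) (u + r • w) / 2 - I (u + r • w)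
  have hg : HasDerivAt g (Q u w - I' u w) 0 := by
    have h1 : HasDerivAt (fun r : ℝ => I (u + r • w)) (I' u w) 0 := by
      have hline : HasDerivAt (fun r : ℝ => u + r • w) w 0 := by
        simpa using ((hasDerivAt_id (0 : ℝ)).smul_const w).const_add u
      have hI0 : HasFDerivAt I (I' u) (u + (0 : ℝ) • w) := by simpa using hIderiv u
      exact hI0.comp_hasDerivAt (0 : ℝ) hline
    have h2 : HasDerivAt (fun r : ℝ => Q (u + r • w) (u + r • w) / 2) (Q u w) 0 := by
      have he : (fun r : ℝ => Q (u + r • w) (u + r • w) / 2) =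
          fun r : ℝ => Q u u / 2 + r * Q u w + r ^ 2 * (Q w w / 2) := by
        funext r
        simp only [map_smul, map_add, LinearMap.add_apply, LinearMap.smul_apply, smul_eq_mul]
        rw [hsymm w u]
        ring
      rw [he]
      have := (((hasDerivAt_id (0 : ℝ)).mul_const (Q u w)).const_add (Q u u / 2)).add
        (((hasDerivAt_id (0 : ℝ)).pow 2).mul_const (Q w w / 2))
      exact this.congr_deriv (by simp)
    exact h2.sub h1
  have hloc : IsLocalMax g 0 := by
    have hcont : Tendsto (fun r : ℝ => t + r * (c * t)) (𝓝 0) (𝓝 t) := by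
      have : Continuous (fun r : ℝ => t + r * (c * t)) := by fun_prop
      simpa using this.tendsto 0
    filter_upwards [hcont.eventually (lt_mem_nhds ht)] with r hr
    have := hmax (u + r • w) ⟨v + r • y + (r * c) • v, ?_, t + r * (c * t), hr, ?_⟩
    · simpa [g] using this
    · exact V.add_mem (V.add_mem hv (V.smul_mem _ hy)) (V.smul_mem _ hv)
    · rw [hwdef, hu]
      module
  exact hloc.hasDerivAt_eq_zero hg

/-- Existence of a maximizer on the half-space. -/
theorem aux_exists {E : Type*} [NormedAddCommGroup E] [InnerProductSpace ℝ E]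
    (Q : E →ₗ[ℝ] E →ₗ[ℝ] ℝ)
    (V : Submodule ℝ E) [FiniteDimensional ℝ V] (hneg : ∀ v ∈ V, v ≠ 0 → Q v v < 0)
    (hpos : ∀ w ∈ Vᗮ, w ≠ 0 → 0 < Q w w)
    (I : E → ℝ) (hIc : Continuous I)
    (hI2 : I 0 = 0 ∧ ∀ u : E, u ≠ 0 → 0 < I u)
    (hI3mono : ∀ u : E, u ≠ 0 → MonotoneOn (fun t : ℝ => I (t • u) / t ^ 2) (Ioi 0))
    (hI3zero : ∀ u : E, u ≠ 0 → Tendsto (fun t : ℝ => I (t • u) / t ^ 2) (𝓝[>] 0) (𝓝 0))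
    (hI3top : ∀ u : E, u ≠ 0 → Tendsto (fun t : ℝ => I (t • u) / t ^ 2) atTop atTop)
    (a : E) (ha : a ∉ V) :
    ∃ u ∈ {w | ∃ v ∈ V, ∃ t : ℝ, 0 < t ∧ w = v + t • a},
      ∀ w ∈ {w | ∃ v ∈ V, ∃ t : ℝ, 0 < t ∧ w = v + t • a},
        Q w w / 2 - I w ≤ Q u u / 2 - I u := by
  obtain ⟨p, hp, b, hb, hab⟩ : ∃ p ∈ V, ∃ b ∈ Vᗮ, a = p + b :=
    ⟨_, V.starProjection_apply_mem a, _, V.sub_starProjection_mem_orthogonal a, by simp⟩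
  have hb0 : b ≠ 0 := by
    rintro rfl
    exact ha (by simpa [hab] using hp)
  have hbb : 0 < ⟪b, b⟫_ℝ := real_inner_self_pos.2 hb0
  have hbV : ∀ v ∈ V, ⟪b, v⟫_ℝ = 0 := fun v hv => by
    rw [real_inner_comm]; exact hb v hv
  have hinner : ∀ v ∈ V, ∀ t : ℝ, ⟪b, v + t • a⟫_ℝ = t * ⟪b, b⟫_ℝ := by
    intro v hv t
    rw [hab, inner_add_right, inner_smul_right, inner_add_right, hbV v hv, hbV p hp]
    ring
  let F : Submodule ℝ E := V ⊔ Submodule.span ℝ {a}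
  haveI : FiniteDimensional ℝ F := by
    change FiniteDimensional ℝ ↥(V ⊔ Submodule.span ℝ {a})
    infer_instance
  obtain ⟨R, hR⟩ := aux_anticoercive Q F I hIc hI3mono hI3top
  have hFmem : ∀ v ∈ V, ∀ t : ℝ, v + t • a ∈ F := fun v hv t =>
    Submodule.add_mem _ (Submodule.mem_sup_left hv)
      (Submodule.smul_mem _ _ (Submodule.mem_sup_right (Submodule.mem_span_singleton_self a)))
  -- a point with positive value
  obtain ⟨t₀, ht₀, hJ₀⟩ : ∃ t : ℝ, 0 < t ∧ 0 < Q (t • b) (t • b) / 2 - I (t • b) := by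
    have hq := hpos b hb hb0
    have h1 := (hI3zero b hb0).eventually (gt_mem_nhds (show (0 : ℝ) < Q b b / 2 by linarith))
    obtain ⟨t, ht, ht0⟩ := (h1.and self_mem_nhdsWithin).exists
    have ht0 : 0 < t := ht0
    refine ⟨t, ht0, ?_⟩
    rw [div_lt_iff₀ (by positivity)] at ht
    simp only [map_smul, LinearMap.smul_apply, smul_eq_mul]
    nlinarith
  have hx₀ : t₀ • b = (-t₀) • p + t₀ • a := by rw [hab]; module
  have hx₀F : t₀ • b ∈ F := hx₀ ▸ hFmem _ (V.smul_mem _ hp) _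
  let K : Set F := Metric.closedBall 0 R ∩ {x | 0 ≤ ⟪b, (x : E)⟫_ℝ}
  have hK : IsCompact K := (isCompact_closedBall 0 R).inter_right
    (isClosed_le continuous_const (continuous_const.inner continuous_subtype_val))
  have hJc : Continuous (fun x : F => Q (x : E) x / 2 - I x) :=
    ((aux_smul_mem_pos Q F).div_const 2).sub (hIc.comp continuous_subtype_val)
  have hinK : ∀ x (hx : x ∈ F), 0 ≤ Q x x / 2 - I x → 0 ≤ ⟪b, x⟫_ℝ → (⟨x, hx⟩ : F) ∈ K := by
    intro x hx h1 h2
    refine ⟨?_, h2⟩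
    rw [mem_closedBall_zero_iff]
    by_contra hcon
    have := hR x hx (not_le.1 hcon)
    linarith
  have hx₀K := hinK _ hx₀F hJ₀.le (by rw [inner_smul_right]; positivity)
  obtain ⟨u, huK, hu⟩ := hK.exists_isMaxOn ⟨_, hx₀K⟩ hJc.continuousOn
  have hJu : 0 < Q (u : E) u / 2 - I u := lt_of_lt_of_le hJ₀ (hu hx₀K)
  refine ⟨u, ?_, ?_⟩
  · obtain ⟨v, hv, z, hz, hvz⟩ := Submodule.mem_sup.1 u.2
    obtain ⟨c, rfl⟩ := Submodule.mem_span_singleton.1 hz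
    refine ⟨v, hv, c, ?_, hvz.symm⟩
    have h1 : 0 ≤ ⟪b, (u : E)⟫_ℝ := huK.2
    rw [← hvz, hinner v hv] at h1
    have hc : 0 ≤ c := nonneg_of_mul_nonneg_left h1 hbb
    rcases hc.eq_or_lt with h | h
    · exfalso
      rw [← h, zero_smul, add_zero] at hvz
      rw [← hvz] at hJu
      by_cases hv0 : v = 0
      · simp [hv0, hI2.1] at hJu
      · have := hneg v hv hv0
        have := hI2.2 v hv0
        linarith
    · exact h
  · rintro w ⟨v, hv, t, ht, rfl⟩
    by_cases hJ : 0 ≤ Q (v + t • a) (v + t • a) / 2 - I (v + t • a)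
    · exact hu (hinK _ (hFmem v hv t) hJ (by rw [hinner v hv]; positivity))
    · linarith

theorem aux_coefH_add {E : Type*} [NormedAddCommGroup E] [InnerProductSpace ℝ E]
    (lam : ℕ → ℝ) (ζ : ℕ → E) (u v : E) (k : ℕ) :
    coefH lam ζ (u + v) k = coefH lam ζ u k + coefH lam ζ v k := by
  simp only [coefH, inner_add_left, add_div]

theorem aux_coefH_smul {E : Type*} [NormedAddCommGroup E] [InnerProductSpace ℝ E]
    (lam : ℕ → ℝ) (ζ : ℕ → E) (c : ℝ) (u : E) (k : ℕ) :
    coefH lam ζ (c • u) k = c * coefH lam ζ u k := by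
  simp only [coefH, real_inner_smul_left, mul_div_assoc]

theorem aux_summable_sq {E : Type*} [NormedAddCommGroup E] [InnerProductSpace ℝ E]
    (lam : ℕ → ℝ) (ζ : ℕ → E) (hlam_nonneg : ∀ k, 0 ≤ lam k)
    (hON : ∀ j k, ⟪ζ j, ζ k⟫_ℝ = if j = k then 1 + lam k else 0) (u : E) :
    Summable (fun k => (1 + lam k) * coefH lam ζ u k ^ 2) := by
  have hp : ∀ k, 0 < 1 + lam k := fun k => by linarith [hlam_nonneg k]
  have ho : Orthonormal ℝ (fun k => (√(1 + lam k))⁻¹ • ζ k) := by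
    rw [orthonormal_iff_ite]
    intro i j
    rw [real_inner_smul_left, real_inner_smul_right, hON]
    split_ifs with h
    · subst h
      have h1 := Real.mul_self_sqrt (hp i).le
      have h2 := (Real.sqrt_pos.2 (hp i)).ne'
      field_simp
      nlinarith
    · simp
  have hs := ho.inner_products_summable u
  refine hs.congr fun k => ?_
  have h1 := Real.sq_sqrt (hp k).le
  have h3 := (hp k).ne'
  rw [real_inner_smul_left, Real.norm_eq_abs, sq_abs, mul_pow, inv_pow, h1, coefH,
    real_inner_comm]
  field_simp

theorem aux_summable {E : Type*} [NormedAddCommGroup E] [InnerProductSpace ℝ E]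
    (lam : ℕ → ℝ) (ζ : ℕ → E) (hlam_nonneg : ∀ k, 0 ≤ lam k)
    (hON : ∀ j k, ⟪ζ j, ζ k⟫_ℝ = if j = k then 1 + lam k else 0)
    (l : ℝ) (hl : 0 ≤ l) (u v : E) :
    Summable (fun k => (lam k - l) * (coefH lam ζ u k * coefH lam ζ v k)) := by
  have h := ((aux_summable_sq lam ζ hlam_nonneg hON u).add
    (aux_summable_sq lam ζ hlam_nonneg hON v)).mul_left (1 + l)
  refine Summable.of_norm_bounded h fun k => ?_
  rw [Real.norm_eq_abs, abs_mul]
  have hk := hlam_nonneg k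
  have h1 : |lam k - l| ≤ (1 + l) * (1 + lam k) := by
    rw [abs_le]; constructor <;> nlinarith [mul_nonneg hl hk]
  have h2 : |coefH lam ζ u k * coefH lam ζ v k| ≤ coefH lam ζ u k ^ 2 + coefH lam ζ v k ^ 2 := by
    rw [abs_le]
    constructor <;>
      nlinarith [sq_nonneg (coefH lam ζ u k + coefH lam ζ v k),
        sq_nonneg (coefH lam ζ u k - coefH lam ζ v k)]
  calc _ ≤ ((1 + l) * (1 + lam k)) * (coefH lam ζ u k ^ 2 + coefH lam ζ v k ^ 2) :=
        mul_le_mul h1 h2 (abs_nonneg _) (by positivity)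
    _ = _ := by ring

theorem aux_bilin {E : Type*} [NormedAddCommGroup E] [InnerProductSpace ℝ E]
    (lam : ℕ → ℝ) (ζ : ℕ → E) (hlam_nonneg : ∀ k, 0 ≤ lam k)
    (hON : ∀ j k, ⟪ζ j, ζ k⟫_ℝ = if j = k then 1 + lam k else 0)
    (l : ℝ) (hl : 0 ≤ l) :
    ∃ Q : E →ₗ[ℝ] E →ₗ[ℝ] ℝ, ∀ u v, qForm lam ζ l u v = Q u v := by
  have hs := aux_summable lam ζ hlam_nonneg hON l hl
  refine ⟨LinearMap.mk₂ ℝ (qForm lam ζ l) ?_ ?_ ?_ ?_, fun u v => rfl⟩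
  · intro u v w
    simp only [qForm]
    rw [← (hs u w).tsum_add (hs v w)]
    refine tsum_congr fun k => ?_
    rw [aux_coefH_add]; ring
  · intro c u w
    simp only [qForm, smul_eq_mul]
    rw [← tsum_mul_left]
    refine tsum_congr fun k => ?_
    rw [aux_coefH_smul]; ring
  · intro w u v
    simp only [qForm]
    rw [← (hs w u).tsum_add (hs w v)]
    refine tsum_congr fun k => ?_
    rw [aux_coefH_add]; ring
  · intro c u w
    simp only [qForm, smul_eq_mul]
    rw [← tsum_mul_left]
    refine tsum_congr fun k => ?_
    rw [aux_coefH_smul]; ring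

theorem aux_ne {E : Type*} [NormedAddCommGroup E] [InnerProductSpace ℝ E]
    (lam : ℕ → ℝ) (ζ : ℕ → E) (hlam_nonneg : ∀ k, 0 ≤ lam k)
    (hdense : (Submodule.span ℝ (Set.range ζ)).topologicalClosure = ⊤)
    (u : E) (hu : u ≠ 0) : ∃ k, coefH lam ζ u k ≠ 0 := by
  by_contra! hcon
  apply hu
  have hz : ∀ k, ⟪u, ζ k⟫_ℝ = 0 := by
    intro k
    have h := hcon k
    have hk := hlam_nonneg k
    rw [coefH, div_eq_zero_iff] at h
    rcases h with h | h
    · exact h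
    · linarith
  have hd : Dense ((Submodule.span ℝ (Set.range ζ) : Submodule ℝ E) : Set E) :=
    Submodule.dense_iff_topologicalClosure_eq_top.2 hdense
  refine hd.eq_zero_of_inner_left (𝕜 := ℝ) fun v hv => ?_
  refine Submodule.span_induction (p := fun x _ => ⟪u, x⟫_ℝ = 0) ?_ ?_ ?_ ?_ hv
  · rintro _ ⟨k, rfl⟩; exact hz k
  · simp
  · intro x y _ _ hx hy; rw [inner_add_right, hx, hy, add_zero]
  · intro c x _ hx; rw [inner_smul_right, hx, mul_zero]

end Helpers

/-- On every half-space `F_n(ũ)⁺` the functional `J_λ` has a unique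
maximizer, which lies in `NP_λ`; consequently
`inf_{NP_λ} J_λ = inf_{ũ ∉ E_n} sup_{F_n(ũ)⁺} J_λ`. -/
theorem exists_unique_maximizer_on_half_space {E : Type*} [NormedAddCommGroup E]
    [InnerProductSpace ℝ E] [CompleteSpace E]
    (lam : ℕ → ℝ) (ζ : ℕ → E)
    (hlam_mono : Monotone lam) (hlam_nonneg : ∀ k, 0 ≤ lam k)
    (hlam_top : Tendsto lam atTop atTop)
    (hON : ∀ j k, ⟪ζ j, ζ k⟫_ℝ = if j = k then 1 + lam k else 0)
    (hdense : (Submodule.span ℝ (Set.range ζ)).topologicalClosure = ⊤)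
    (I : E → ℝ) (I' : E → E →L[ℝ] ℝ)
    (hIderiv : ∀ u, HasFDerivAt I (I' u) u) (hIderiv_cont : Continuous I')
    (hI1 : ∀ (u : ℕ → E) (a : E),
      (∀ φ : E →L[ℝ] ℝ, Tendsto (fun j => φ (u j)) atTop (𝓝 (φ a))) →
      Tendsto (fun j => I (u j)) atTop (𝓝 (I a)))
    (hI2 : I 0 = 0 ∧ ∀ u : E, u ≠ 0 → 0 < I u)
    (hI3mono : ∀ u : E, u ≠ 0 → MonotoneOn (fun t : ℝ => I (t • u) / t ^ 2) (Ioi 0))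
    (hI3zero : ∀ u : E, u ≠ 0 → Tendsto (fun t : ℝ => I (t • u) / t ^ 2) (𝓝[>] 0) (𝓝 0))
    (hI3top : ∀ u : E, u ≠ 0 → Tendsto (fun t : ℝ => I (t • u) / t ^ 2) atTop atTop)
    (hI4 : ∀ u : E, u ≠ 0 → ∀ v : E, ∀ s : ℝ, -1 ≤ s →
      I u - I ((1 + s) • u + v) + I' u ((s * (s / 2 + 1)) • u + (1 + s) • v) ≤ 0)
    (hI4strict : ∀ u : E, u ≠ 0 → ∀ s : ℝ, -1 ≤ s → s ≠ 0 →
      I u - I ((1 + s) • u) + I' u ((s * (s / 2 + 1)) • u) < 0)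
    (n : ℕ)
    (lambda : ℝ) (hlambda : lambda ∈ Ioo (lam n) (lam (n + 1))) :
    (∀ ut : E, ut ∉ Esub ζ n →
      (∃! u : E, u ∈ FsubPlus ζ n ut ∧
        ∀ w ∈ FsubPlus ζ n ut, Jfun lam ζ I lambda w ≤ Jfun lam ζ I lambda u) ∧
      (∀ u : E, u ∈ FsubPlus ζ n ut →
        (∀ w ∈ FsubPlus ζ n ut, Jfun lam ζ I lambda w ≤ Jfun lam ζ I lambda u) →
        u ∈ NehariPankov lam ζ I' n lambda)) ∧
    sInf (Jfun lam ζ I lambda '' NehariPankov lam ζ I' n lambda) =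
      sInf ((fun ut => sSup (Jfun lam ζ I lambda '' FsubPlus ζ n ut)) ''
        {ut : E | ut ∉ Esub ζ n}) := by
  have hl : 0 ≤ lambda := (hlam_nonneg n).trans hlambda.1.le
  obtain ⟨Q, hQ⟩ := aux_bilin lam ζ hlam_nonneg hON lambda hl
  have hsum := aux_summable lam ζ hlam_nonneg hON lambda hl
  have hsymm : ∀ u v, Q u v = Q v u := by
    intro u v
    rw [← hQ, ← hQ]
    exact tsum_congr fun k => by ring
  have hJ : ∀ u, Jfun lam ζ I lambda u = Q u u / 2 - I u := fun u => by rw [Jfun, hQ]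
  have hgt : ∀ k, n < k → lambda < lam k := fun k hk =>
    hlambda.2.trans_le (hlam_mono hk)
  have hle : ∀ k, k ≤ n → lam k < lambda := fun k hk =>
    (hlam_mono hk).trans_lt hlambda.1
  haveI : FiniteDimensional ℝ (Esub ζ n) :=
    FiniteDimensional.span_of_finite ℝ ((Set.finite_le_nat n).image ζ)
  have hneg : ∀ v ∈ Esub ζ n, v ≠ 0 → Q v v < 0 := by
    intro v hv hv0
    have hc : ∀ k, n < k → coefH lam ζ v k = 0 := by
      intro k hk
      refine Submodule.span_induction (p := fun x _ => coefH lam ζ x k = 0) ?_ ?_ ?_ ?_ hv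
      · rintro _ ⟨j, hj, rfl⟩
        have hj : j ≤ n := hj
        rw [coefH, hON, if_neg (by omega), zero_div]
      · simp [coefH]
      · intro x y _ _ hx hy; rw [aux_coefH_add, hx, hy, add_zero]
      · intro c x _ hx; rw [aux_coefH_smul, hx, mul_zero]
    obtain ⟨k, hk⟩ := aux_ne lam ζ hlam_nonneg hdense v hv0
    have hkn : k ≤ n := by
      by_contra h
      exact hk (hc k (not_le.1 h))
    have hpos := (hsum v v).neg.tsum_pos (fun j => ?_) k ?_
    · rw [tsum_neg] at hpos
      rw [← hQ, qForm]
      linarith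
    · rcases le_or_gt j n with h | h
      · nlinarith [hle j h, mul_self_nonneg (coefH lam ζ v j)]
      · simp [hc j h]
    · nlinarith [hle k hkn, mul_self_pos.2 hk]
  have hpos : ∀ w ∈ (Esub ζ n)ᗮ, w ≠ 0 → 0 < Q w w := by
    intro w hw hw0
    have hc : ∀ k, k ≤ n → coefH lam ζ w k = 0 := by
      intro k hk
      have : ⟪ζ k, w⟫_ℝ = 0 := hw _ (Submodule.subset_span ⟨k, hk, rfl⟩)
      rw [coefH, real_inner_comm, this, zero_div]
    obtain ⟨k, hk⟩ := aux_ne lam ζ hlam_nonneg hdense w hw0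
    have hkn : n < k := by
      by_contra h
      exact hk (hc k (not_lt.1 h))
    rw [← hQ, qForm]
    refine (hsum w w).tsum_pos (fun j => ?_) k ?_
    · rcases le_or_gt j n with h | h
      · simp [hc j h]
      · nlinarith [hgt j h, mul_self_nonneg (coefH lam ζ w j)]
    · nlinarith [hgt k hkn, mul_self_pos.2 hk]
  have hIc : Continuous I :=
    continuous_iff_continuousAt.2 fun u => (hIderiv u).continuousAt
  -- maximizers lie in the Nehari–Pankov set
  have hNP : ∀ ut : E, ut ∉ Esub ζ n → ∀ u : E, u ∈ FsubPlus ζ n ut →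
      (∀ w ∈ FsubPlus ζ n ut, Jfun lam ζ I lambda w ≤ Jfun lam ζ I lambda u) →
        u ∈ NehariPankov lam ζ I' n lambda := by
    rintro ut hut u ⟨v, hv, t, ht, rfl⟩ hmax
    refine ⟨fun hmem => hut ?_, fun w hw => ?_⟩
    · have h1 := (Submodule.add_mem_iff_right _ hv).1 hmem
      exact (Submodule.smul_mem_iff _ ht.ne').1 h1
    · rw [Jderiv, hQ]
      simp only [hJ] at hmax
      exact aux_crit Q hsymm (Esub ζ n) I I' hIderiv ut v hv t ht hmax w hw
  -- points of the Nehari–Pankov set are strict maximizers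
  have hstrict : ∀ u ∈ NehariPankov lam ζ I' n lambda, ∀ v ∈ Esub ζ n, ∀ t : ℝ, 0 < t →
      v + t • u ≠ u → Jfun lam ζ I lambda (v + t • u) < Jfun lam ζ I lambda u := by
    intro u hu v hv t ht hne
    rw [hJ, hJ]
    refine aux_strict Q hsymm (Esub ζ n) hneg I I' hI4 hI4strict u hu.1 (fun w hw => ?_)
      v hv t ht hne
    rw [← hQ]
    exact hu.2 w hw
  have hex : ∀ ut : E, ut ∉ Esub ζ n → ∃ u ∈ FsubPlus ζ n ut,
      ∀ w ∈ FsubPlus ζ n ut, Jfun lam ζ I lambda w ≤ Jfun lam ζ I lambda u := by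
    intro ut hut
    simp only [hJ]
    exact aux_exists Q (Esub ζ n) hneg hpos I hIc hI2 hI3mono hI3zero hI3top ut hut
  have hsup : ∀ ut u : E, u ∈ FsubPlus ζ n ut →
      (∀ w ∈ FsubPlus ζ n ut, Jfun lam ζ I lambda w ≤ Jfun lam ζ I lambda u) →
      sSup (Jfun lam ζ I lambda '' FsubPlus ζ n ut) = Jfun lam ζ I lambda u := by
    intro ut u hu hmax
    refine IsGreatest.csSup_eq ⟨⟨u, hu, rfl⟩, ?_⟩
    rintro _ ⟨w, hw, rfl⟩
    exact hmax w hw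
  refine ⟨fun ut hut => ⟨?_, hNP ut hut⟩, ?_⟩
  · obtain ⟨u, hu, hmax⟩ := hex ut hut
    refine ⟨u, ⟨hu, hmax⟩, ?_⟩
    rintro u' ⟨hu', hmax'⟩
    by_contra hne
    have hn := hNP ut hut u hu hmax
    have h1 := hmax' u hu
    obtain ⟨v, hv, t, ht, rfl⟩ := hu
    obtain ⟨v', hv', t', ht', rfl⟩ := hu'
    have heq : v' + t' • ut = (v' - (t' / t) • v) + (t' / t) • (v + t • ut) := by
      rw [smul_add, smul_smul, div_mul_cancel₀ _ ht.ne']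
      abel
    rw [heq] at hne h1
    have := hstrict _ hn _ (Submodule.sub_mem _ hv' (Submodule.smul_mem _ (t' / t) hv))
      (t' / t) (div_pos ht' ht) hne
    linarith
  · congr 1
    ext x
    constructor
    · rintro ⟨u, hu, rfl⟩
      refine ⟨u, hu.1, ?_⟩
      refine hsup u u ⟨0, Submodule.zero_mem _, 1, one_pos, by simp⟩ ?_
      rintro _ ⟨v, hv, t, ht, rfl⟩
      by_cases hne : v + t • u = u
      · rw [hne]
      · exact (hstrict u hu v hv t ht hne).le
    · rintro ⟨ut, hut, rfl⟩
      obtain ⟨u, hu, hmax⟩ := hex ut hut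
      exact ⟨u, hNP ut hut u hu hmax, (hsup ut u hu hmax).symm⟩
end

section
/- Under assumptions (I1)–(I4), fix λ ∈ (λ_n, λ_{n+1}) and, for every w ∈ E∖E_n, let m_λ(w) denote the unique global maximizer of J_λ on F_n(w)⁺ (which exists and belongs to NP_λ). Then the map m_λ : E∖E_n → NP_λ is continuous (with respect to the norm topology of E). -/
open Filter Topology Set
open scoped InnerProductSpace

/- Abstract setting: `E = D(A^{1/2})` is a real Hilbert space in which the rescaled
eigenfunctions `ζ_k / √(1+λ_k)` form a Hilbert basis (encoded by `hON` and `hdense` below);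
the `H`-inner product of `u, v ∈ E` is recovered as `∑ₖ ⟨u,ζ_k⟩_H ⟨v,ζ_k⟩_H`, where
`⟨u,ζ_k⟩_H = ⟨u,ζ_k⟩_E / (1+λ_k)`. -/

variable {E : Type*} [NormedAddCommGroup E] [InnerProductSpace ℝ E] [CompleteSpace E]

theorem qForm_exists_bilin {E : Type*} [NormedAddCommGroup E]
    [InnerProductSpace ℝ E]
    (lam : ℕ → ℝ) (ζ : ℕ → E) (hlam_nonneg : ∀ k, 0 ≤ lam k)
    (hON : ∀ j k, ⟪ζ j, ζ k⟫_ℝ = if j = k then 1 + lam k else 0) (lambda : ℝ) :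
    (∀ u v, Summable fun k => (lam k - lambda) * (coefH lam ζ u k * coefH lam ζ v k)) ∧
    ∃ B : E →L[ℝ] E →L[ℝ] ℝ, ∀ u v, qForm lam ζ lambda u v = B u v := by
  have hpos : ∀ k, 0 < 1 + lam k := fun k => by linarith [hlam_nonneg k]
  have hsq : ∀ k, 0 < √(1 + lam k) := fun k => Real.sqrt_pos.2 (hpos k)
  have hss : ∀ k, √(1 + lam k) * √(1 + lam k) = 1 + lam k :=
    fun k => Real.mul_self_sqrt (hpos k).le
  let e : ℕ → E := fun k => (√(1 + lam k))⁻¹ • ζ k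
  have he : Orthonormal ℝ e := by
    rw [orthonormal_iff_ite]
    intro i j
    simp only [e, inner_smul_left, inner_smul_right, hON]
    split_ifs with h
    · subst h
      have := hss i
      have h2 := (hsq i).ne'
      simp only [conj_trivial]
      rw [← mul_assoc, ← mul_inv, this]
      exact inv_mul_cancel₀ (hpos i).ne'
    · simp
  have hterm : ∀ u v k, (lam k - lambda) * (coefH lam ζ u k * coefH lam ζ v k)
      = (lam k - lambda) / (1 + lam k) * (⟪e k, u⟫_ℝ * ⟪e k, v⟫_ℝ) := by
    intro u v k
    simp only [e, coefH, inner_smul_left, conj_trivial]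
    have h1 := (hpos k).ne'
    have h2 := (hsq k).ne'
    have h3 : (√(1 + lam k))⁻¹ * (√(1 + lam k))⁻¹ = (1 + lam k)⁻¹ := by
      rw [← mul_inv, hss]
    calc _ = (lam k - lambda) / (1 + lam k) * ((1 + lam k)⁻¹ * (⟪ζ k, u⟫_ℝ * ⟪ζ k, v⟫_ℝ)) := by
          rw [real_inner_comm u (ζ k), real_inner_comm v (ζ k)]; field_simp
      _ = _ := by rw [← h3]; ring
  have hc : ∀ k, |(lam k - lambda) / (1 + lam k)| ≤ 1 + |lambda| := by
    intro k
    rw [abs_div, abs_of_pos (hpos k), div_le_iff₀ (hpos k)]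
    have h1 : |lam k - lambda| ≤ |lam k| + |lambda| := abs_sub _ _
    rw [abs_of_nonneg (hlam_nonneg k)] at h1
    nlinarith [mul_nonneg (hlam_nonneg k) (abs_nonneg lambda), hlam_nonneg k]
  have hC : 0 ≤ 1 + |lambda| := by positivity
  have hs2 : ∀ u, Summable fun k => ⟪e k, u⟫_ℝ ^ 2 := fun u => by
    simpa using he.inner_products_summable u
  have hle2 : ∀ u, ∑' k, ⟪e k, u⟫_ℝ ^ 2 ≤ ‖u‖ ^ 2 := fun u => by
    simpa using he.tsum_inner_products_le (x := u)
  have hcs : ∀ u v, (Summable fun k => |⟪e k, u⟫_ℝ| * |⟪e k, v⟫_ℝ|) ∧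
      ∑' k, |⟪e k, u⟫_ℝ| * |⟪e k, v⟫_ℝ| ≤ ‖u‖ * ‖v‖ := by
    intro u v
    have hsum : Summable fun k => |⟪e k, u⟫_ℝ| * |⟪e k, v⟫_ℝ| := by
      refine Summable.of_nonneg_of_le (fun k => by positivity) (fun k => ?_)
        ((hs2 u).add (hs2 v))
      rw [← sq_abs (⟪e k, u⟫_ℝ), ← sq_abs (⟪e k, v⟫_ℝ)]
      nlinarith [sq_nonneg (|⟪e k, u⟫_ℝ| - |⟪e k, v⟫_ℝ|), sq_nonneg (|⟪e k, u⟫_ℝ|),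
        sq_nonneg (|⟪e k, v⟫_ℝ|)]
    refine ⟨hsum, hsum.tsum_le_of_sum_le fun s => ?_⟩
    refine abs_le_of_sq_le_sq' ?_ (by positivity) |>.2
    calc _ ≤ (∑ k ∈ s, |⟪e k, u⟫_ℝ| ^ 2) * ∑ k ∈ s, |⟪e k, v⟫_ℝ| ^ 2 :=
          Finset.sum_mul_sq_le_sq_mul_sq _ _ _
      _ ≤ ‖u‖ ^ 2 * ‖v‖ ^ 2 := by
          simp only [sq_abs]
          refine mul_le_mul ?_ ?_ (Finset.sum_nonneg fun i _ => sq_nonneg _) (sq_nonneg _)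
          · exact ((hs2 u).sum_le_tsum s fun i _ => sq_nonneg _).trans (hle2 u)
          · exact ((hs2 v).sum_le_tsum s fun i _ => sq_nonneg _).trans (hle2 v)
      _ = _ := by ring
  have hbd : ∀ u v k, ‖(lam k - lambda) * (coefH lam ζ u k * coefH lam ζ v k)‖ ≤
      (1 + |lambda|) * (|⟪e k, u⟫_ℝ| * |⟪e k, v⟫_ℝ|) := by
    intro u v k
    rw [hterm, Real.norm_eq_abs, abs_mul, abs_mul]
    exact mul_le_mul_of_nonneg_right (hc k) (by positivity)
  have hS : ∀ u v, Summable fun k => (lam k - lambda) * (coefH lam ζ u k * coefH lam ζ v k) :=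
    fun u v => Summable.of_norm_bounded ((hcs u v).1.mul_left _) (hbd u v)
  refine ⟨hS, ?_⟩
  have hadd : ∀ u v k, coefH lam ζ (u + v) k = coefH lam ζ u k + coefH lam ζ v k := by
    intro u v k; simp [coefH, inner_add_left, add_div]
  have hsmul : ∀ (c : ℝ) u k, coefH lam ζ (c • u) k = c * coefH lam ζ u k := by
    intro c u k; simp [coefH, inner_smul_left, mul_div_assoc]
  let L : E →ₗ[ℝ] E →ₗ[ℝ] ℝ := LinearMap.mk₂ ℝ (qForm lam ζ lambda)
    (fun u u' v => by
      rw [qForm, qForm, qForm, ← (hS u v).tsum_add (hS u' v)]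
      exact tsum_congr fun k => by rw [hadd]; ring)
    (fun c u v => by
      rw [qForm, qForm, smul_eq_mul, ← tsum_mul_left]
      exact tsum_congr fun k => by rw [hsmul]; ring)
    (fun u v v' => by
      rw [qForm, qForm, qForm, ← (hS u v).tsum_add (hS u v')]
      exact tsum_congr fun k => by rw [hadd]; ring)
    (fun c u v => by
      rw [qForm, qForm, smul_eq_mul, ← tsum_mul_left]
      exact tsum_congr fun k => by rw [hsmul]; ring)
  refine ⟨L.mkContinuous₂ (1 + |lambda|) fun u v => ?_, fun u v => rfl⟩
  calc ‖L u v‖ ≤ ∑' k, (1 + |lambda|) * (|⟪e k, u⟫_ℝ| * |⟪e k, v⟫_ℝ|) :=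
        tsum_of_norm_bounded ((hcs u v).1.mul_left _).hasSum (hbd u v)
    _ ≤ (1 + |lambda|) * ‖u‖ * ‖v‖ := by
        rw [tsum_mul_left, mul_assoc]
        exact mul_le_mul_of_nonneg_left (hcs u v).2 hC

theorem qForm_symm {E : Type*} [NormedAddCommGroup E] [InnerProductSpace ℝ E]
    (lam : ℕ → ℝ) (ζ : ℕ → E) (lambda : ℝ) (u v : E) :
    qForm lam ζ lambda u v = qForm lam ζ lambda v u :=
  tsum_congr fun k => by ring

theorem eq_zero_of_qForm_nonneg {E : Type*} [NormedAddCommGroup E]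
    [InnerProductSpace ℝ E]
    (lam : ℕ → ℝ) (ζ : ℕ → E) (hlam_mono : Monotone lam) (hlam_nonneg : ∀ k, 0 ≤ lam k)
    (hON : ∀ j k, ⟪ζ j, ζ k⟫_ℝ = if j = k then 1 + lam k else 0) (n : ℕ) (lambda : ℝ)
    (hl : lam n < lambda) (v : E) (hv : v ∈ Esub ζ n) (hq : 0 ≤ qForm lam ζ lambda v v) :
    v = 0 := by
  have hpos : ∀ k, 0 < 1 + lam k := fun k => by linarith [hlam_nonneg k]
  have hS := (qForm_exists_bilin lam ζ hlam_nonneg hON lambda).1 v v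
  have h0 : ∀ k, n < k → ⟪v, ζ k⟫_ℝ = 0 := by
    intro k hk
    refine Submodule.span_induction (p := fun v _ => ⟪v, ζ k⟫_ℝ = 0) ?_ (by simp) ?_ ?_ hv
    · rintro _ ⟨j, hj, rfl⟩
      have : j ≤ n := hj
      rw [hON, if_neg (by omega)]
    · intro x y _ _ hx hy; rw [inner_add_left, hx, hy, add_zero]
    · intro a x _ hx; rw [inner_smul_left, hx, mul_zero]
  have hneg : ∀ k ≤ n, lam k - lambda < 0 := fun k hk => by linarith [hlam_mono hk]
  have hle : ∀ k, (lam k - lambda) * (coefH lam ζ v k * coefH lam ζ v k) ≤ 0 := by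
    intro k
    by_cases hk : k ≤ n
    · exact mul_nonpos_of_nonpos_of_nonneg (hneg k hk).le (mul_self_nonneg _)
    · simp [coefH, h0 k (not_le.1 hk)]
  have hz : ∀ k ≤ n, ⟪v, ζ k⟫_ℝ = 0 := by
    intro k hk
    by_contra hne
    have hlt : (lam k - lambda) * (coefH lam ζ v k * coefH lam ζ v k) < 0 :=
      mul_neg_of_neg_of_pos (hneg k hk)
        (mul_self_pos.2 (div_ne_zero hne (hpos k).ne'))
    have := hS.tsum_lt_tsum hle hlt summable_zero
    rw [tsum_zero] at this
    exact absurd hq (not_le.2 this)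
  have : ⟪v, v⟫_ℝ = 0 := by
    refine Submodule.span_induction (p := fun x _ => ⟪v, x⟫_ℝ = 0) ?_ (by simp) ?_ ?_ hv
    · rintro _ ⟨j, hj, rfl⟩
      exact hz j hj
    · intro x y _ _ hx hy; rw [inner_add_right, hx, hy, add_zero]
    · intro a x _ hx; rw [inner_smul_right, hx, mul_zero]
  exact inner_self_eq_zero.1 this

/-- The map `m_λ : E ∖ E_n → NP_λ`, assigning to `w` the unique global
maximizer of `J_λ` on `F_n(w)⁺`, is continuous. -/
theorem maximizer_map_continuous {E : Type*} [NormedAddCommGroup E]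
    [InnerProductSpace ℝ E] [CompleteSpace E]
    (lam : ℕ → ℝ) (ζ : ℕ → E)
    (hlam_mono : Monotone lam) (hlam_nonneg : ∀ k, 0 ≤ lam k)
    (hlam_top : Tendsto lam atTop atTop)
    (hON : ∀ j k, ⟪ζ j, ζ k⟫_ℝ = if j = k then 1 + lam k else 0)
    (hdense : (Submodule.span ℝ (Set.range ζ)).topologicalClosure = ⊤)
    (I : E → ℝ) (I' : E → E →L[ℝ] ℝ)
    (hIderiv : ∀ u, HasFDerivAt I (I' u) u) (hIderiv_cont : Continuous I')
    (hI1 : ∀ (u : ℕ → E) (a : E),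
      (∀ φ : E →L[ℝ] ℝ, Tendsto (fun j => φ (u j)) atTop (𝓝 (φ a))) →
      Tendsto (fun j => I (u j)) atTop (𝓝 (I a)))
    (hI2 : I 0 = 0 ∧ ∀ u : E, u ≠ 0 → 0 < I u)
    (hI3mono : ∀ u : E, u ≠ 0 → MonotoneOn (fun t : ℝ => I (t • u) / t ^ 2) (Ioi 0))
    (hI3zero : ∀ u : E, u ≠ 0 → Tendsto (fun t : ℝ => I (t • u) / t ^ 2) (𝓝[>] 0) (𝓝 0))
    (hI3top : ∀ u : E, u ≠ 0 → Tendsto (fun t : ℝ => I (t • u) / t ^ 2) atTop atTop)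
    (hI4 : ∀ u : E, u ≠ 0 → ∀ v : E, ∀ s : ℝ, -1 ≤ s →
      I u - I ((1 + s) • u + v) + I' u ((s * (s / 2 + 1)) • u + (1 + s) • v) ≤ 0)
    (hI4strict : ∀ u : E, u ≠ 0 → ∀ s : ℝ, -1 ≤ s → s ≠ 0 →
      I u - I ((1 + s) • u) + I' u ((s * (s / 2 + 1)) • u) < 0)
    (n : ℕ)
    (lambda : ℝ) (hlambda : lambda ∈ Ioo (lam n) (lam (n + 1)))
    (m : E → E)
    (hm : ∀ w : E, w ∉ Esub ζ n →
      m w ∈ FsubPlus ζ n w ∧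
      (∀ x ∈ FsubPlus ζ n w, Jfun lam ζ I lambda x ≤ Jfun lam ζ I lambda (m w)) ∧
      m w ∈ NehariPankov lam ζ I' n lambda) :
    ContinuousOn m {w : E | w ∉ Esub ζ n} := by
  obtain ⟨-, B, hB⟩ := qForm_exists_bilin lam ζ hlam_nonneg hON lambda
  have hBs : ∀ u v, B u v = B v u := fun u v => by rw [← hB, ← hB, qForm_symm]
  have hIc : Continuous I := continuous_iff_continuousAt.2 fun u => (hIderiv u).continuousAt
  have hJ : ∀ u, Jfun lam ζ I lambda u = B u u / 2 - I u := fun u => by rw [Jfun, hB]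
  have hJc : Continuous (Jfun lam ζ I lambda) := by
    have : Jfun lam ζ I lambda = fun u => B u u / 2 - I u := funext hJ
    rw [this]; fun_prop
  -- comparison inequality and uniqueness
  have huniq : ∀ u ∈ NehariPankov lam ζ I' n lambda, ∀ v ∈ Esub ζ n, ∀ s : ℝ, -1 ≤ s →
      Jfun lam ζ I lambda u ≤ Jfun lam ζ I lambda ((1 + s) • u + v) →
      (1 + s) • u + v = u := by
    intro u hu v hv s hs hle
    have hu0 : u ≠ 0 := fun h => hu.1 (h ▸ (Esub ζ n).zero_mem)
    have hcrit := hu.2 ((s * (s / 2 + 1)) • u + (1 + s) • v)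
      (add_mem (Submodule.smul_mem _ _ (Submodule.mem_sup_right
        (Submodule.mem_span_singleton_self u)))
        (Submodule.smul_mem _ _ (Submodule.mem_sup_left hv)))
    rw [Jderiv, hB] at hcrit
    have h4 := hI4 u hu0 v s hs
    have h5 := hI4strict u hu0 s hs
    rw [hJ, hJ] at hle
    have hv0 : v = 0 := by
      refine eq_zero_of_qForm_nonneg lam ζ hlam_mono hlam_nonneg hON n lambda hlambda.1 v hv ?_
      rw [hB]
      generalize I' u ((s * (s / 2 + 1)) • u + (1 + s) • v) = X at *
      simp only [map_add, map_smul, add_apply, smul_apply,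
        smul_eq_mul, hBs v u] at hle hcrit
      nlinarith
    subst hv0
    by_cases hs0 : s = 0
    · simp [hs0]
    exfalso
    have h5 := h5 hs0
    simp only [smul_zero, add_zero] at *
    generalize I' u ((s * (s / 2 + 1)) • u) = X at *
    simp only [map_smul, smul_apply, smul_eq_mul] at hle hcrit
    nlinarith
  intro w hw
  have hfin : FiniteDimensional ℝ (Esub ζ n) :=
    FiniteDimensional.span_of_finite ℝ ((Set.finite_le_nat n).image ζ)
  have : ProperSpace (Esub ζ n × ℝ) := FiniteDimensional.proper ℝ _
  rw [ContinuousWithinAt]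
  refine tendsto_of_seq_tendsto fun x hx => ?_
  have hx1 : Tendsto x atTop (𝓝 w) := tendsto_nhds_of_tendsto_nhdsWithin hx
  have hx2 : ∀ᶠ j in atTop, x j ∉ Esub ζ n :=
    (tendsto_nhdsWithin_iff.1 hx).2
  have hp : ∀ j, ∃ p : Esub ζ n × ℝ, x j ∉ Esub ζ n →
      0 < p.2 ∧ m (x j) = (p.1 : E) + p.2 • x j := by
    intro j
    by_cases h : x j ∈ Esub ζ n
    · exact ⟨0, fun h' => absurd h h'⟩
    · obtain ⟨v, hv, t, ht, e⟩ := (hm _ h).1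
      exact ⟨(⟨v, hv⟩, t), fun _ => ⟨ht, e⟩⟩
  choose p hp using hp
  refine tendsto_of_subseq_tendsto fun ns hns => ?_
  -- a subsequence along which p is bounded exists
  have hxn : Tendsto (fun j => x (ns j)) atTop (𝓝 w) := hx1.comp hns
  have hbound : ∃ R : ℝ, ∃ᶠ j in atTop, p (ns j) ∈ Metric.closedBall 0 R := by
    by_contra hcon
    push Not at hcon
    have hinf : Tendsto (fun j => ‖p (ns j)‖) atTop atTop := by
      rw [tendsto_atTop]
      intro R
      filter_upwards [hcon R] with j hj
      rw [mem_closedBall_zero_iff, not_le] at hj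
      exact hj.le
    have hsph : ∃ᶠ j in atTop, (‖p (ns j)‖⁻¹ • p (ns j)) ∈ Metric.closedBall (0 : Esub ζ n × ℝ) 1 := by
      refine Eventually.frequently (Eventually.of_forall fun j => ?_)
      rw [mem_closedBall_zero_iff, norm_smul, norm_inv, norm_norm]
      exact inv_mul_le_one
    obtain ⟨a, -, φ, hφ, ha⟩ := (isCompact_closedBall (0 : Esub ζ n × ℝ) 1).tendsto_subseq'
      hsph
    have hna : ‖a‖ = 1 := by
      refine tendsto_nhds_unique ha.norm ?_
      refine tendsto_const_nhds.congr' ?_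
      filter_upwards [(hinf.comp hφ.tendsto_atTop).eventually_gt_atTop 0] with j hj
      simp only [Function.comp] at hj ⊢
      rw [norm_smul, norm_inv, norm_norm, inv_mul_cancel₀ hj.ne']
    set e : E := (a.1 : E) + a.2 • w with he
    have he0 : e ≠ 0 := by
      intro h0
      by_cases h2 : a.2 = 0
      · have h1 : a.1 = 0 := by
          rw [he, h2, zero_smul, add_zero] at h0
          exact_mod_cast h0
        have : a = 0 := Prod.ext h1 h2
        rw [this, norm_zero] at hna
        exact zero_ne_one hna
      · apply hw
        have : w = (-(a.2)⁻¹) • (a.1 : E) := by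
          have h3 : a.2 • w = - (a.1 : E) := by
            rw [eq_neg_iff_add_eq_zero, add_comm]; exact h0
          rw [neg_smul, ← smul_neg, ← h3, inv_smul_smul₀ h2]
        rw [this]
        exact Submodule.smul_mem _ _ a.1.2
    let r : ℕ → ℝ := fun j => ‖p (ns (φ j))‖
    have hr : Tendsto r atTop atTop := hinf.comp hφ.tendsto_atTop
    let y : ℕ → E := fun j =>
      ((r j)⁻¹ • p (ns (φ j))).1 + ((r j)⁻¹ • p (ns (φ j))).2 • x (ns (φ j))
    have hy : Tendsto y atTop (𝓝 e) := by
      have h1 : Tendsto (fun j => (((r j)⁻¹ • p (ns (φ j))).1 : E)) atTop (𝓝 (a.1 : E)) :=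
        ((continuous_subtype_val.comp continuous_fst).tendsto a).comp ha
      have h2 : Tendsto (fun j => ((r j)⁻¹ • p (ns (φ j))).2) atTop (𝓝 a.2) :=
        (continuous_snd.tendsto a).comp ha
      exact h1.add (h2.smul (hxn.comp hφ.tendsto_atTop))
    have hx2' : ∀ᶠ j in atTop, x (ns (φ j)) ∉ Esub ζ n :=
      (hns.comp hφ.tendsto_atTop).eventually hx2
    -- choose T with I (T e) / T^2 large
    obtain ⟨T, hT1, hT0⟩ := ((hI3top e he0).eventually_gt_atTop (B e e / 2 + 1)
      |>.and (eventually_gt_atTop (0 : ℝ))).exists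
    have hev1 : ∀ᶠ j in atTop, B (y j) (y j) / 2 - I (T • y j) / T ^ 2 < -1 := by
      have hc : Continuous fun z : E => B z z / 2 - I (T • z) / T ^ 2 := by fun_prop
      refine ((hc.tendsto e).comp hy).eventually_lt_const ?_
      linarith
    have hev2 : ∀ᶠ j in atTop, Jfun lam ζ I lambda w - 1 <
        Jfun lam ζ I lambda (x (ns (φ j))) :=
      ((hJc.tendsto w).comp (hxn.comp hφ.tendsto_atTop)).eventually_const_lt (by linarith)
    obtain ⟨j, h1, h2, h3, h4, h5, h6, h7⟩ := (hev1.and (hev2.and (hx2'.and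
      ((hr.eventually_ge_atTop T).and ((hr.eventually_ge_atTop 1).and
      ((hr.eventually_ge_atTop (1 - Jfun lam ζ I lambda w)).and
        (hy.eventually_ne he0))))))).exists
    have hr0 : 0 < r j := by linarith
    have hmy : m (x (ns (φ j))) = r j • y j := by
      rw [(hp _ h3).2]
      simp only [y, Prod.smul_fst, Prod.smul_snd, Submodule.coe_smul, smul_add, smul_smul,
        smul_eq_mul]
      rw [mul_inv_cancel₀ hr0.ne', one_smul, ← mul_assoc, mul_inv_cancel₀ hr0.ne', one_mul]
    have hmax := (hm _ h3).2.1 (x (ns (φ j))) ⟨0, zero_mem _, 1, one_pos, by simp⟩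
    rw [hmy, hJ (r j • y j)] at hmax
    have hmon := hI3mono (y j) h7 (mem_Ioi.2 hT0) (mem_Ioi.2 hr0) h4
    simp only at hmon
    have hdiv : B (y j) (y j) / 2 - I (r j • y j) / r j ^ 2 < -1 := by linarith
    have hr2 : 0 < r j ^ 2 := by positivity
    have hmul : I (r j • y j) / r j ^ 2 * r j ^ 2 = I (r j • y j) :=
      div_mul_cancel₀ _ hr2.ne'
    simp only [map_smul, smul_apply, smul_eq_mul] at hmax
    have hmul2 := mul_lt_mul_of_pos_right hdiv hr2
    rw [sub_mul, hmul] at hmul2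
    nlinarith
  obtain ⟨R, hR⟩ := hbound
  obtain ⟨a, -, φ, hφ, ha⟩ := (isCompact_closedBall (0 : Esub ζ n × ℝ) R).tendsto_subseq' hR
  refine ⟨φ, ?_⟩
  have hxφ : Tendsto (fun j => x (ns (φ j))) atTop (𝓝 w) := hxn.comp hφ.tendsto_atTop
  have hx2' : ∀ᶠ j in atTop, x (ns (φ j)) ∉ Esub ζ n :=
    (hns.comp hφ.tendsto_atTop).eventually hx2
  have h1 : Tendsto (fun j => ((p (ns (φ j))).1 : E)) atTop (𝓝 (a.1 : E)) :=
    ((continuous_subtype_val.comp continuous_fst).tendsto a).comp ha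
  have h2 : Tendsto (fun j => (p (ns (φ j))).2) atTop (𝓝 a.2) :=
    (continuous_snd.tendsto a).comp ha
  have ha2 : 0 ≤ a.2 := by
    refine ge_of_tendsto h2 ?_
    filter_upwards [hx2'] with j hj using (hp _ hj).1.le
  have hlim : Tendsto (fun j => m (x (ns (φ j)))) atTop (𝓝 ((a.1 : E) + a.2 • w)) := by
    refine (h1.add (h2.smul hxφ)).congr' ?_
    filter_upwards [hx2'] with j hj using (hp _ hj).2.symm
  obtain ⟨⟨v0, hv0, t0, ht0, hmw⟩, -, hNP⟩ := hm w hw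
  have hJle : Jfun lam ζ I lambda (m w) ≤ Jfun lam ζ I lambda ((a.1 : E) + a.2 • w) := by
    have hL : Tendsto (fun j => Jfun lam ζ I lambda (v0 + t0 • x (ns (φ j)))) atTop
        (𝓝 (Jfun lam ζ I lambda (m w))) := by
      rw [hmw]
      exact (hJc.tendsto _).comp (tendsto_const_nhds.add (hxφ.const_smul t0))
    refine le_of_tendsto_of_tendsto hL ((hJc.tendsto _).comp hlim) ?_
    filter_upwards [hx2'] with j hj
    exact (hm _ hj).2.1 _ ⟨v0, hv0, t0, ht0, rfl⟩
  have hdec : (a.1 : E) + a.2 • w =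
      (1 + (a.2 / t0 - 1)) • m w + ((a.1 : E) - (a.2 / t0) • v0) := by
    rw [hmw, add_sub_cancel, smul_add, smul_smul, div_mul_cancel₀ _ ht0.ne']
    abel
  have hfinal := huniq (m w) hNP ((a.1 : E) - (a.2 / t0) • v0)
    (sub_mem a.1.2 (Submodule.smul_mem _ _ hv0)) (a.2 / t0 - 1)
    (by have := div_nonneg ha2 ht0.le; linarith) (by rw [← hdec]; exact hJle)
  rw [← hdec] at hfinal
  rw [hfinal] at hlim
  exact hlim
end

section
/- Under assumptions (I1)–(I4), let λ ∈ (λ_n, λ_{n+1}) and let u ∈ NP_λ be a minimizer of J_λ on NP_λ, i.e. J_λ(u) = inf_{NP_λ} J_λ. Then u is a critical point of J_λ, i.e. J_λ′(u)[v] = 0 for all v ∈ E. -/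
open Filter Topology Set
open scoped InnerProductSpace

/- Abstract setting: `E = D(A^{1/2})` is a real Hilbert space in which the rescaled
eigenfunctions `ζ_k / √(1+λ_k)` form a Hilbert basis (encoded by `hON` and `hdense` below);
the `H`-inner product of `u, v ∈ E` is recovered as `∑ₖ ⟨u,ζ_k⟩_H ⟨v,ζ_k⟩_H`, where
`⟨u,ζ_k⟩_H = ⟨u,ζ_k⟩_E / (1+λ_k)`. -/

variable {E : Type*} [NormedAddCommGroup E] [InnerProductSpace ℝ E] [CompleteSpace E]

/-- Abstract local argument: a minimizer which is a strict maximum on its fibre is critical. -/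
theorem abstract_critical {E : Type*} [NormedAddCommGroup E] [InnerProductSpace ℝ E]
    (J : E → ℝ) (J' : E → E →L[ℝ] ℝ) (hJ : ∀ x, HasFDerivAt J (J' x) x) (hJ' : Continuous J')
    (V : Submodule ℝ E) [FiniteDimensional ℝ V] (u : E) (huV : u ∉ V)
    (hmax : ∀ e ∈ V, ∀ t : ℝ, 0 ≤ t → e + t • u ≠ u → J (e + t • u) < J u)
    (hmin : ∀ w, w ∉ V → (∀ e ∈ V, J' w e = 0) → J' w w = 0 → J u ≤ J w)
    (v : E) (hv : J' u v < 0) : False := by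
  have hJc : Continuous J := continuous_iff_continuousAt.2 fun x => (hJ x).continuousAt
  let G : (V × ℝ) × ℝ → E := fun q => (q.1.1 : E) + q.1.2 • (u + q.2 • v)
  have hG : Continuous G := by fun_prop
  have hG0 : G ((0, 1), 0) = u := by simp [G]
  have h1 : ∀ᶠ q in 𝓝 (((0, 1), 0) : (V × ℝ) × ℝ), J' (G q) v < 0 := by
    have hc : Continuous fun q => J' (G q) v := by fun_prop
    exact hc.continuousAt.eventually_lt continuousAt_const (by simpa [hG0] using hv)
  obtain ⟨ρ, hρ, hρ'⟩ := Metric.eventually_nhds_iff.1 h1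
  obtain ⟨r, hr0, hr1, hrρ⟩ : ∃ r : ℝ, 0 < r ∧ r ≤ 1 / 2 ∧ r < ρ :=
    ⟨min (1 / 2) (ρ / 2), by positivity, min_le_left _ _,
      lt_of_le_of_lt (min_le_right _ _) (by linarith)⟩
  have : ProperSpace V := FiniteDimensional.proper ℝ V
  have hdisj : ∀ p ∈ Metric.sphere ((0, 1) : V × ℝ) r, J (G (p, 0)) < J u := by
    intro p hp
    have hp' : dist p ((0, 1) : V × ℝ) = r := hp
    have ht : |p.2 - 1| ≤ r := by
      rw [← Real.dist_eq, ← hp', Prod.dist_eq]; exact le_max_right _ _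
    have ht0 : 0 < p.2 := by have := (abs_le.1 ht).1; linarith
    have : G (p, 0) = p.1 + p.2 • u := by simp [G]
    rw [this]
    refine hmax _ p.1.2 _ ht0.le fun heq => ?_
    have h2 : (1 - p.2) • u ∈ V := by
      have : (1 - p.2) • u = p.1 := by
        rw [sub_smul, one_smul]; nth_rewrite 1 [← heq]; simp
      rw [this]; exact p.1.2
    have h3 : 1 - p.2 = 0 := by
      by_contra hne
      exact huV ((V.smul_mem_iff hne).1 h2)
    have h4 : p.2 = 1 := by linarith
    have h5 : p.1 = 0 := by
      rw [h4, one_smul] at heq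
      exact Subtype.ext (by simpa using heq)
    have : p = (0, 1) := Prod.ext h5 h4
    rw [this, dist_self] at hp'
    exact hr0.ne hp'
  have h2 : ∀ᶠ s in 𝓝 (0 : ℝ), ∀ p ∈ Metric.sphere ((0, 1) : V × ℝ) r,
      J (G (p, s)) < J (G ((0, 1), s)) := by
    refine (isCompact_sphere _ r).eventually_forall_of_forall_eventually fun p hp => ?_
    have hc1 : Continuous fun z : ℝ × (V × ℝ) => J (G (z.2, z.1)) := by fun_prop
    have hc2 : Continuous fun z : ℝ × (V × ℝ) => J (G ((0, 1), z.1)) := by fun_prop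
    have hlt : J (G (p, 0)) < J (G ((0, 1), 0)) := by rw [hG0]; exact hdisj p hp
    exact (hc1.continuousAt (x := (0, p))).eventually_lt (hc2.continuousAt (x := (0, p))) hlt
  have h3 : ∀ᶠ s in 𝓝 (0 : ℝ), u + s • v ∉ V := by
    have hcl : IsOpen ((V : Set E)ᶜ) := (Submodule.closed_of_finiteDimensional V).isOpen_compl
    have hc : Continuous fun s : ℝ => u + s • v := by fun_prop
    exact hc.continuousAt.eventually (hcl.mem_nhds (by simpa using huV))
  obtain ⟨δ, hδ, hδ'⟩ := Metric.eventually_nhds_iff.1 (h2.and h3)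
  obtain ⟨s, hs0, hsδ, hsρ⟩ : ∃ s : ℝ, 0 < s ∧ s < δ ∧ s < ρ :=
    ⟨min (δ / 2) (ρ / 2), by positivity, lt_of_le_of_lt (min_le_left _ _) (by linarith),
      lt_of_le_of_lt (min_le_right _ _) (by linarith)⟩
  obtain ⟨hs2, hs3⟩ := hδ' (y := s) (by simpa [abs_of_pos hs0] using hsδ)
  obtain ⟨p, hpK, hpmax⟩ := (isCompact_closedBall ((0, 1) : V × ℝ) r).exists_isMaxOn
    ⟨_, Metric.mem_closedBall_self hr0.le⟩
    (f := fun p => J (G (p, s))) (by fun_prop)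
  have hpd : dist p ((0, 1) : V × ℝ) < r := by
    refine lt_of_le_of_ne hpK fun h => ?_
    exact absurd (hs2 p h) (not_lt.2 (hpmax (Metric.mem_closedBall_self hr0.le)))
  have ht : |p.2 - 1| ≤ r := by
    refine le_trans ?_ hpd.le
    rw [← Real.dist_eq, Prod.dist_eq]; exact le_max_right _ _
  have ht0 : 0 < p.2 := by have := (abs_le.1 ht).1; linarith
  have hloc : IsLocalMax (fun p => J (G (p, s))) p := by
    refine hpmax.isLocalMax ?_
    exact Filter.mem_of_superset (Metric.isOpen_ball.mem_nhds hpd) Metric.ball_subset_closedBall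
  let L : V × ℝ →L[ℝ] E := V.subtypeL.coprod (ContinuousLinearMap.toSpanSingleton ℝ (u + s • v))
  have hL : ∀ p, L p = G (p, s) := by intro p; simp [L, G]
  have hder : HasFDerivAt (fun p => J (G (p, s))) ((J' (G (p, s))).comp L) p := by
    have := HasFDerivAt.comp p (by rw [hL]; exact hJ (G (p, s))) L.hasFDerivAt
    refine this.congr_of_eventuallyEq (Eventually.of_forall fun q => ?_)
    simp [hL]
  have hz := hloc.hasFDerivAt_eq_zero hder
  have hz' : ∀ q, J' (G (p, s)) (L q) = 0 := fun q => by
    simpa using congrArg (fun T => T q) hz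
  have hle : J u ≤ J (G (p, s)) := by
    refine hmin _ ?_ ?_ ?_
    · intro hmem
      have : p.2 • (u + s • v) ∈ V := by
        have := V.sub_mem hmem p.1.2
        simpa [G] using this
      exact hs3 ((V.smul_mem_iff ht0.ne').1 this)
    · intro e he
      have := hz' (⟨e, he⟩, 0)
      simpa [L] using this
    · have := hz' p
      rwa [hL] at this
  have hd : ∀ x : ℝ, HasDerivAt (fun x : ℝ => J (G (p, x))) (J' (G (p, x)) (p.2 • v)) x := by
    intro x
    refine HasFDerivAt.comp_hasDerivAt x (hJ (G (p, x))) ?_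
    have h := (((hasDerivAt_id x).smul_const v).const_add u).const_smul p.2 |>.const_add (p.1 : E)
    simpa [G] using h
  obtain ⟨c, hc, hceq⟩ := exists_hasDerivAt_eq_slope (fun x : ℝ => J (G (p, x))) _ hs0
    (by fun_prop) (fun x _ => hd x)
  have hneg : J' (G (p, c)) v < 0 := by
    refine hρ' ?_
    rw [Prod.dist_eq]
    refine max_lt (hpd.trans hrρ) ?_
    simp only [Real.dist_eq, sub_zero, abs_of_pos hc.1]
    exact hc.2.trans hsρ
  have hneg' : J' (G (p, c)) (p.2 • v) < 0 := by
    rw [map_smul, smul_eq_mul]; exact mul_neg_of_pos_of_neg ht0 hneg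
  rw [hceq, sub_zero, div_neg_iff] at hneg'
  have hlt : J (G (p, s)) < J (G (p, 0)) := by
    rcases hneg' with h | h
    · linarith [h.2]
    · linarith [h.1]
  have hle2 : J (G (p, 0)) ≤ J u := by
    have hGp : G (p, 0) = p.1 + p.2 • u := by simp [G]
    rw [hGp]
    by_cases h : (p.1 : E) + p.2 • u = u
    · rw [h]
    · exact (hmax _ p.1.2 _ ht0.le h).le
  linarith

theorem coefH_sq_summable {E : Type*} [NormedAddCommGroup E] [InnerProductSpace ℝ E]
    [CompleteSpace E]
    (lam : ℕ → ℝ) (ζ : ℕ → E) (hlam_nonneg : ∀ k, 0 ≤ lam k)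
    (hON : ∀ j k, ⟪ζ j, ζ k⟫_ℝ = if j = k then 1 + lam k else 0) (x : E) :
    Summable (fun k => (1 + lam k) * coefH lam ζ x k ^ 2) ∧
      ∑' k, (1 + lam k) * coefH lam ζ x k ^ 2 ≤ ‖x‖ ^ 2 := by
  have hp : ∀ k, 0 < 1 + lam k := fun k => by linarith [hlam_nonneg k]
  have hb : Orthonormal ℝ (fun k => (√(1 + lam k))⁻¹ • ζ k) := by
    rw [orthonormal_iff_ite]
    intro i j
    rw [inner_smul_left, inner_smul_right, hON]
    split_ifs with h
    · subst h
      have h1 := Real.mul_self_sqrt (hp i).le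
      have h2 : √(1 + lam i) ≠ 0 := (Real.sqrt_pos.2 (hp i)).ne'
      simp only [conj_trivial]
      rw [← h1]; field_simp
      simp [pow_two]
    · simp
  have key : ∀ k, ‖⟪(√(1 + lam k))⁻¹ • ζ k, x⟫_ℝ‖ ^ 2 = (1 + lam k) * coefH lam ζ x k ^ 2 := by
    intro k
    have h1 := Real.sq_sqrt (hp k).le
    have h2 := (hp k).ne'
    rw [inner_smul_left, Real.norm_eq_abs, sq_abs, real_inner_comm, coefH]
    simp only [conj_trivial, mul_pow, inv_pow, h1, div_pow]
    field_simp
  have hs := hb.inner_products_summable x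
  have ht := hb.tsum_inner_products_le x
  simp only [key] at hs ht
  exact ⟨hs, ht⟩

theorem qForm_term_bound (l lambda a b : ℝ) (hl : 0 ≤ l) :
    ‖(l - lambda) * (a * b)‖ ≤
      (1 + |lambda|) * (((1 + l) * a ^ 2 + (1 + l) * b ^ 2) / 2) := by
  rw [norm_mul, Real.norm_eq_abs, Real.norm_eq_abs]
  have h1 : |l - lambda| ≤ (1 + |lambda|) * (1 + l) := by
    have h := abs_sub l lambda
    rw [abs_of_nonneg hl] at h
    nlinarith [abs_nonneg lambda]
  have h2 : |a * b| ≤ (a ^ 2 + b ^ 2) / 2 := by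
    rw [abs_le]; constructor <;> nlinarith [sq_nonneg (a + b), sq_nonneg (a - b)]
  calc _ ≤ ((1 + |lambda|) * (1 + l)) * ((a ^ 2 + b ^ 2) / 2) := by gcongr
    _ = _ := by ring

theorem qForm_summable {E : Type*} [NormedAddCommGroup E] [InnerProductSpace ℝ E]
    [CompleteSpace E]
    (lam : ℕ → ℝ) (ζ : ℕ → E) (hlam_nonneg : ∀ k, 0 ≤ lam k)
    (hON : ∀ j k, ⟪ζ j, ζ k⟫_ℝ = if j = k then 1 + lam k else 0) (lambda : ℝ) (x y : E) :
    Summable (fun k => (lam k - lambda) * (coefH lam ζ x k * coefH lam ζ y k)) ∧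
      |qForm lam ζ lambda x y| ≤ (1 + |lambda|) * ((‖x‖ ^ 2 + ‖y‖ ^ 2) / 2) := by
  obtain ⟨hx, hx'⟩ := coefH_sq_summable lam ζ hlam_nonneg hON x
  obtain ⟨hy, hy'⟩ := coefH_sq_summable lam ζ hlam_nonneg hON y
  have hb := fun k => qForm_term_bound (lam k) lambda (coefH lam ζ x k) (coefH lam ζ y k)
    (hlam_nonneg k)
  have hs := ((hx.add hy).div_const 2).mul_left (1 + |lambda|)
  refine ⟨Summable.of_norm_bounded hs hb, ?_⟩
  have h := tsum_of_norm_bounded hs.hasSum hb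
  rw [tsum_mul_left, tsum_div_const, hx.tsum_add hy] at h
  refine le_trans h ?_
  gcongr

theorem qForm_bilin {E : Type*} [NormedAddCommGroup E] [InnerProductSpace ℝ E]
    [CompleteSpace E]
    (lam : ℕ → ℝ) (ζ : ℕ → E) (hlam_nonneg : ∀ k, 0 ≤ lam k)
    (hON : ∀ j k, ⟪ζ j, ζ k⟫_ℝ = if j = k then 1 + lam k else 0) (lambda : ℝ) :
    ∃ B : E →L[ℝ] E →L[ℝ] ℝ, ∀ x y, B x y = qForm lam ζ lambda x y := by
  have hS := fun x y => (qForm_summable lam ζ hlam_nonneg hON lambda x y).1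
  have hBd := fun x y => (qForm_summable lam ζ hlam_nonneg hON lambda x y).2
  have hca : ∀ x y k, coefH lam ζ (x + y) k = coefH lam ζ x k + coefH lam ζ y k := by
    intro x y k; simp [coefH, inner_add_left, add_div]
  have hcs : ∀ (c : ℝ) x k, coefH lam ζ (c • x) k = c * coefH lam ζ x k := by
    intro c x k; simp [coefH, inner_smul_left, mul_div_assoc]
  have hsymm : ∀ x y, qForm lam ζ lambda x y = qForm lam ζ lambda y x := by
    intro x y; unfold qForm; congr 1; ext k; ring
  have hadd : ∀ x y z, qForm lam ζ lambda (x + y) z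
      = qForm lam ζ lambda x z + qForm lam ζ lambda y z := by
    intro x y z
    unfold qForm
    rw [← (hS x z).tsum_add (hS y z)]
    congr 1; ext k; rw [hca]; ring
  have hsm : ∀ (c : ℝ) x z, qForm lam ζ lambda (c • x) z = c * qForm lam ζ lambda x z := by
    intro c x z
    unfold qForm
    rw [← tsum_mul_left]
    congr 1; ext k; rw [hcs]; ring
  let B0 : E →ₗ[ℝ] E →ₗ[ℝ] ℝ := LinearMap.mk₂ ℝ (qForm lam ζ lambda) hadd hsm
    (fun x y z => by rw [hsymm, hadd, hsymm y, hsymm z])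
    (fun c x y => by rw [hsymm, hsm, hsymm y]; rfl)
  refine ⟨B0.mkContinuous₂ (1 + |lambda|) ?_, fun x y => rfl⟩
  intro x y
  show ‖qForm lam ζ lambda x y‖ ≤ _
  by_cases hx : x = 0
  · subst hx
    have : qForm lam ζ lambda (0 : E) y = 0 := by simpa using hsm 0 0 y
    simp [this]
  by_cases hy : y = 0
  · subst hy
    have : qForm lam ζ lambda x (0 : E) = 0 := by rw [hsymm]; simpa using hsm 0 0 x
    simp [this]
  have hx0 := norm_pos_iff.2 hx
  have hy0 := norm_pos_iff.2 hy
  have h := hBd (‖x‖⁻¹ • x) (‖y‖⁻¹ • y)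
  rw [hsm, hsymm, hsm, hsymm, norm_smul, norm_smul, norm_inv, norm_inv, norm_norm, norm_norm,
    inv_mul_cancel₀ hx0.ne', inv_mul_cancel₀ hy0.ne', abs_mul, abs_mul,
    abs_of_pos (inv_pos.2 hx0), abs_of_pos (inv_pos.2 hy0)] at h
  rw [Real.norm_eq_abs]
  have h' : ‖x‖⁻¹ * (‖y‖⁻¹ * |qForm lam ζ lambda x y|) ≤ 1 + |lambda| := by
    refine h.trans (le_of_eq ?_); ring
  rw [inv_mul_le_iff₀ hx0, inv_mul_le_iff₀ hy0] at h'
  refine h'.trans (le_of_eq ?_); ring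

theorem qForm_neg_on_Esub {E : Type*} [NormedAddCommGroup E] [InnerProductSpace ℝ E]
    [CompleteSpace E]
    (lam : ℕ → ℝ) (ζ : ℕ → E) (hlam_mono : Monotone lam) (hlam_nonneg : ∀ k, 0 ≤ lam k)
    (hON : ∀ j k, ⟪ζ j, ζ k⟫_ℝ = if j = k then 1 + lam k else 0) (lambda : ℝ)
    (n : ℕ) (hn : lam n < lambda) (e : E) (he : e ∈ Esub ζ n) (he0 : e ≠ 0) :
    qForm lam ζ lambda e e < 0 := by
  have hp : ∀ k, 0 < 1 + lam k := fun k => by linarith [hlam_nonneg k]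
  have hS := (qForm_summable lam ζ hlam_nonneg hON lambda e e).1
  have hbig : ∀ k, n < k → coefH lam ζ e k = 0 := by
    intro k hk
    have : ⟪e, ζ k⟫_ℝ = 0 := by
      refine Submodule.span_induction (p := fun x _ => ⟪x, ζ k⟫_ℝ = 0) ?_ ?_ ?_ ?_ he
      · rintro _ ⟨j, hj, rfl⟩
        have hj' : j ≤ n := hj
        rw [hON, if_neg (by omega)]
      · simp
      · intro x y _ _ hx hy; rw [inner_add_left, hx, hy, add_zero]
      · intro c x _ hx; rw [inner_smul_left, hx, mul_zero]
    rw [coefH, this, zero_div]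
  have hex : ∃ k ≤ n, coefH lam ζ e k ≠ 0 := by
    by_contra! hcon
    have h0 : ⟪e, e⟫_ℝ = 0 := by
      refine Submodule.span_induction (p := fun x _ => ⟪e, x⟫_ℝ = 0) ?_ ?_ ?_ ?_ he
      · rintro _ ⟨j, hj, rfl⟩
        have := hcon j hj
        rw [coefH, div_eq_zero_iff] at this
        exact this.resolve_right (hp j).ne'
      · simp
      · intro x y _ _ hx hy; rw [inner_add_right, hx, hy, add_zero]
      · intro c x _ hx; rw [inner_smul_right, hx, mul_zero]
    exact he0 (inner_self_eq_zero.1 h0)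
  obtain ⟨k, hk, hk0⟩ := hex
  have hle : ∀ j, (lam j - lambda) * (coefH lam ζ e j * coefH lam ζ e j) ≤ 0 := by
    intro j
    rcases le_or_gt j n with hj | hj
    · have := hlam_mono hj
      exact mul_nonpos_of_nonpos_of_nonneg (by linarith) (mul_self_nonneg _)
    · rw [hbig j hj]; simp
  have hlt : (lam k - lambda) * (coefH lam ζ e k * coefH lam ζ e k) < 0 := by
    have := hlam_mono hk
    exact mul_neg_of_neg_of_pos (by linarith) (mul_self_pos.2 hk0)
  have := Summable.tsum_lt_tsum hle hlt hS summable_zero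
  simpa [qForm] using this

/-- Every minimizer of `J_λ` on the Nehari–Pankov set `NP_λ` is a
critical point of `J_λ`. -/
theorem minimizer_is_critical_point {E : Type*} [NormedAddCommGroup E]
    [InnerProductSpace ℝ E] [CompleteSpace E]
    (lam : ℕ → ℝ) (ζ : ℕ → E)
    (hlam_mono : Monotone lam) (hlam_nonneg : ∀ k, 0 ≤ lam k)
    (hlam_top : Tendsto lam atTop atTop)
    (hON : ∀ j k, ⟪ζ j, ζ k⟫_ℝ = if j = k then 1 + lam k else 0)
    (hdense : (Submodule.span ℝ (Set.range ζ)).topologicalClosure = ⊤)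
    (I : E → ℝ) (I' : E → E →L[ℝ] ℝ)
    (hIderiv : ∀ u, HasFDerivAt I (I' u) u) (hIderiv_cont : Continuous I')
    (hI1 : ∀ (u : ℕ → E) (a : E),
      (∀ φ : E →L[ℝ] ℝ, Tendsto (fun j => φ (u j)) atTop (𝓝 (φ a))) →
      Tendsto (fun j => I (u j)) atTop (𝓝 (I a)))
    (hI2 : I 0 = 0 ∧ ∀ u : E, u ≠ 0 → 0 < I u)
    (hI3mono : ∀ u : E, u ≠ 0 → MonotoneOn (fun t : ℝ => I (t • u) / t ^ 2) (Ioi 0))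
    (hI3zero : ∀ u : E, u ≠ 0 → Tendsto (fun t : ℝ => I (t • u) / t ^ 2) (𝓝[>] 0) (𝓝 0))
    (hI3top : ∀ u : E, u ≠ 0 → Tendsto (fun t : ℝ => I (t • u) / t ^ 2) atTop atTop)
    (hI4 : ∀ u : E, u ≠ 0 → ∀ v : E, ∀ s : ℝ, -1 ≤ s →
      I u - I ((1 + s) • u + v) + I' u ((s * (s / 2 + 1)) • u + (1 + s) • v) ≤ 0)
    (hI4strict : ∀ u : E, u ≠ 0 → ∀ s : ℝ, -1 ≤ s → s ≠ 0 →
      I u - I ((1 + s) • u) + I' u ((s * (s / 2 + 1)) • u) < 0)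
    (n : ℕ)
    (lambda : ℝ) (hlambda : lambda ∈ Ioo (lam n) (lam (n + 1)))
    (u : E) (hu : u ∈ NehariPankov lam ζ I' n lambda)
    (hmin : ∀ v ∈ NehariPankov lam ζ I' n lambda,
      Jfun lam ζ I lambda u ≤ Jfun lam ζ I lambda v) :
    ∀ v : E, Jderiv lam ζ I' lambda u v = 0 := by
  obtain ⟨B, hB⟩ := qForm_bilin lam ζ hlam_nonneg hON lambda
  have hBs : ∀ x y, B x y = B y x := by
    intro x y; rw [hB, hB]; unfold qForm; congr 1; ext k; ring
  have hJd : ∀ x, HasFDerivAt (Jfun lam ζ I lambda) (B x - I' x) x := by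
    intro x
    have h1 : HasFDerivAt (fun x => B x x) (B x + B.flip x) x := by
      have := B.hasFDerivAt (x := x) |>.clm_apply (hasFDerivAt_id x)
      refine this.congr_fderiv ?_
      ext y; simp
    have h2 := (h1.const_mul (1 / 2 : ℝ)).sub (hIderiv x)
    refine (h2.congr_fderiv ?_).congr_of_eventuallyEq (Eventually.of_forall fun y => ?_)
    · ext y
      simp [hBs y x]; ring
    · simp [Jfun, hB]; ring
  obtain ⟨huV, hcrit⟩ := hu
  have hu0 : u ≠ 0 := fun h => huV (h ▸ Submodule.zero_mem _)
  have hfin : FiniteDimensional ℝ (Esub ζ n) :=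
    FiniteDimensional.span_of_finite ℝ ((Set.finite_le_nat n).image ζ)
  have hFu : ∀ e ∈ Esub ζ n, ∀ a : ℝ, B u (a • u + e) = I' u (a • u + e) := by
    intro e he a
    have := hcrit (a • u + e) (Submodule.add_mem _
      (Submodule.mem_sup_right (Submodule.smul_mem _ _ (Submodule.mem_span_singleton_self u)))
      (Submodule.mem_sup_left he))
    rw [Jderiv, ← hB] at this
    linarith
  have hmax : ∀ e ∈ Esub ζ n, ∀ t : ℝ, 0 ≤ t → e + t • u ≠ u →
      Jfun lam ζ I lambda (e + t • u) < Jfun lam ζ I lambda u := by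
    intro e he t ht hne
    have hq := hFu (t • e) (Submodule.smul_mem _ _ he) ((t - 1) * ((t - 1) / 2 + 1))
    simp only [Jfun, ← hB]
    have hexp : B (e + t • u) (e + t • u) = B e e + 2 * t * B u e + t ^ 2 * B u u := by
      simp [hBs e u]; ring
    have hq' : B u (((t - 1) * ((t - 1) / 2 + 1)) • u + t • e)
        = (t - 1) * ((t - 1) / 2 + 1) * B u u + t * B u e := by simp
    by_cases he0 : e = 0
    · subst he0
      have hs := hI4strict u hu0 (t - 1) (by linarith)
        (fun h => hne (by rw [show t = 1 by linarith]; simp))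
      rw [show 1 + (t - 1) = t by ring] at hs
      simp only [smul_zero, add_zero] at hq hq'
      rw [hexp]
      simp only [map_zero, mul_zero, zero_add, add_zero] at *
      nlinarith
    · have hs := hI4 u hu0 e (t - 1) (by linarith)
      rw [show 1 + (t - 1) = t by ring, add_comm (t • u) e] at hs
      have hn := qForm_neg_on_Esub lam ζ hlam_mono hlam_nonneg hON lambda n hlambda.1 e he he0
      rw [← hB] at hn
      rw [hexp]
      nlinarith
  have hmin' : ∀ w, w ∉ Esub ζ n → (∀ e ∈ Esub ζ n, (B w - I' w) e = 0) →
      (B w - I' w) w = 0 → Jfun lam ζ I lambda u ≤ Jfun lam ζ I lambda w := by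
    intro w hw he hww
    refine hmin w ⟨hw, fun y hy => ?_⟩
    obtain ⟨e, he', z, hz, rfl⟩ := Submodule.mem_sup.1 hy
    obtain ⟨c, rfl⟩ := Submodule.mem_span_singleton.1 hz
    have : Jderiv lam ζ I' lambda w (e + c • w) = (B w - I' w) (e + c • w) := by
      simp [Jderiv, ← hB]
    rw [this, map_add, map_smul, he e he', hww]; simp
  have hc : Continuous fun x => B x - I' x := B.continuous.sub hIderiv_cont
  have key := abstract_critical (Jfun lam ζ I lambda) (fun x => B x - I' x) hJd hc
    (Esub ζ n) u huV hmax hmin'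
  intro v
  have hv : Jderiv lam ζ I' lambda u v = (B u - I' u) v := by simp [Jderiv, ← hB]
  rw [hv]
  rcases lt_trichotomy ((B u - I' u) v) 0 with h | h | h
  · exact (key v h).elim
  · exact h
  · exact (key (-v) (by rw [map_neg]; linarith)).elim
end

section
/- Under assumptions (I1)–(I4), the map λ ↦ c_λ is continuous on (λ_n, λ_{n+1}). Moreover, for every λ ∈ (λ_n, λ_{n+1}), limsup_{ε→0⁺} (c_{λ−ε} − c_λ)/ε ≤ inf{ ‖u‖_H²/2 : u ∈ Q_λ } and sup{ ‖u‖_H²/2 : u ∈ Q_λ } ≤ liminf_{ε→0⁺} (c_λ − c_{λ+ε})/ε. -/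
open Filter Topology Set
open scoped InnerProductSpace

/- Abstract setting: `E = D(A^{1/2})` is a real Hilbert space in which the rescaled
eigenfunctions `ζ_k / √(1+λ_k)` form a Hilbert basis (encoded by `hON` and `hdense` below);
the `H`-inner product of `u, v ∈ E` is recovered as `∑ₖ ⟨u,ζ_k⟩_H ⟨v,ζ_k⟩_H`, where
`⟨u,ζ_k⟩_H = ⟨u,ζ_k⟩_E / (1+λ_k)`. -/

variable {E : Type*} [NormedAddCommGroup E] [InnerProductSpace ℝ E] [CompleteSpace E]

/-- Weak sequential convergence. -/
def WConv {E : Type*} [NormedAddCommGroup E] [InnerProductSpace ℝ E]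
    (x : ℕ → E) (a : E) : Prop :=
  ∀ φ : E →L[ℝ] ℝ, Tendsto (fun j => φ (x j)) atTop (𝓝 (φ a))

/-- The abstract setting. -/
structure Ctx (E : Type*) [NormedAddCommGroup E] [InnerProductSpace ℝ E] where
  h : E →L[ℝ] E →L[ℝ] ℝ
  hsymm : ∀ u v, h u v = h v u
  hnonneg : ∀ u, 0 ≤ h u u
  hle : ∀ u, h u u ≤ ‖u‖ ^ 2
  W : Submodule ℝ E
  fin : FiniteDimensional ℝ W
  horth : ∀ v ∈ W, ∀ w ∈ Wᗮ, h v w = 0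
  a : ℝ
  b : ℝ
  gap : ∀ l ∈ Ioo a b, ∃ δ : ℝ, 0 < δ ∧ (∀ w ∈ Wᗮ, δ * ‖w‖ ^ 2 ≤ ‖w‖ ^ 2 - (1 + l) * h w w) ∧
    (∀ v ∈ W, ‖v‖ ^ 2 - (1 + l) * h v v ≤ - (δ * ‖v‖ ^ 2))
  e : E
  he : e ∉ W
  ws : ∀ (x : ℕ → E) (M : ℝ), (∀ j, ‖x j‖ ≤ M) → ∃ (φ : ℕ → ℕ) (y : E), StrictMono φ ∧
    WConv (x ∘ φ) y
  I : E → ℝ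
  I' : E → E →L[ℝ] ℝ
  hd : ∀ u, HasFDerivAt I (I' u) u
  I1 : ∀ (u : ℕ → E) (a : E), WConv u a → Tendsto (fun j => I (u j)) atTop (𝓝 (I a))
  I0 : I 0 = 0
  Ipos : ∀ u : E, u ≠ 0 → 0 < I u
  Imono : ∀ u : E, u ≠ 0 → MonotoneOn (fun t : ℝ => I (t • u) / t ^ 2) (Ioi 0)
  Izero : ∀ u : E, u ≠ 0 → Tendsto (fun t : ℝ => I (t • u) / t ^ 2) (𝓝[>] 0) (𝓝 0)
  Itop : ∀ u : E, u ≠ 0 → Tendsto (fun t : ℝ => I (t • u) / t ^ 2) atTop atTop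
  I4 : ∀ u : E, u ≠ 0 → ∀ v : E, ∀ s : ℝ, -1 ≤ s →
      I u - I ((1 + s) • u + v) + I' u ((s * (s / 2 + 1)) • u + (1 + s) • v) ≤ 0
  I4s : ∀ u : E, u ≠ 0 → ∀ s : ℝ, -1 ≤ s → s ≠ 0 →
      I u - I ((1 + s) • u) + I' u ((s * (s / 2 + 1)) • u) < 0

namespace Ctx

variable {E : Type*} [NormedAddCommGroup E] [InnerProductSpace ℝ E] (C : Ctx E)

instance : FiniteDimensional ℝ C.W := C.fin

/-- bilinear form -/
noncomputable def B (l : ℝ) : E →L[ℝ] E →L[ℝ] ℝ := 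
  (isBoundedBilinearMap_inner (𝕜 := ℝ) (E := E)).toContinuousLinearMap - (1 + l) • C.h

lemma B_apply (l : ℝ) (u v : E) : C.B l u v = ⟪u, v⟫_ℝ - (1 + l) * C.h u v := rfl

lemma B_self (l : ℝ) (u : E) : C.B l u u = ‖u‖ ^ 2 - (1 + l) * C.h u u := by
  rw [B_apply, real_inner_self_eq_norm_sq]

lemma B_symm (l : ℝ) (u v : E) : C.B l u v = C.B l v u := by
  rw [B_apply, B_apply, C.hsymm, real_inner_comm]

lemma B_shift (l m : ℝ) (u : E) : C.B m u u = C.B l u u + (l - m) * C.h u u := by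
  rw [B_self, B_self]; ring

noncomputable def J (l : ℝ) (u : E) : ℝ := C.B l u u / 2 - C.I u

lemma J_shift (l m : ℝ) (u : E) : C.J m u = C.J l u + (l - m) / 2 * C.h u u := by
  rw [J, J, C.B_shift l m]; ring

lemma J_zero (l : ℝ) : C.J l 0 = 0 := by simp [J, C.I0]

lemma I_nonneg (u : E) : 0 ≤ C.I u := by
  by_cases h : u = 0
  · rw [h, C.I0]
  · exact (C.Ipos u h).le

lemma I_cont : Continuous C.I :=
  continuous_iff_continuousAt.2 fun u => (C.hd u).continuousAt

lemma B_cont (l : ℝ) : Continuous fun u => C.B l u u := by fun_prop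

lemma h_cont : Continuous fun u => C.h u u := by fun_prop

lemma J_cont (l : ℝ) : Continuous (C.J l) :=
  ((C.B_cont l).div_const 2).sub C.I_cont

lemma B_orth (l : ℝ) {v w : E} (hv : v ∈ C.W) (hw : w ∈ C.Wᗮ) : C.B l v w = 0 := by
  rw [B_apply, C.horth v hv w hw, (Submodule.mem_orthogonal _ _).1 hw v hv]; ring

lemma B_le (l : ℝ) (u : E) : C.B l u u ≤ (1 + |1 + l|) * ‖u‖ ^ 2 := by
  rw [B_self]
  have h1 := C.hnonneg u
  have h2 := C.hle u
  have : -(1 + l) * C.h u u ≤ |1 + l| * ‖u‖ ^ 2 :=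
    (mul_le_mul_of_nonneg_right (neg_le_abs _) h1).trans
      (mul_le_mul_of_nonneg_left h2 (abs_nonneg _))
  linarith

/-- orthogonal projection -/
noncomputable def P : E →L[ℝ] E := C.W.starProjection

lemma P_mem (u : E) : C.P u ∈ C.W := Submodule.starProjection_apply_mem _ _

lemma sub_P_mem (u : E) : u - C.P u ∈ C.Wᗮ := Submodule.sub_starProjection_mem_orthogonal _

lemma P_norm (u : E) : ‖C.P u‖ ≤ ‖u‖ := Submodule.norm_starProjection_apply_le _ _

lemma sub_P_ne {u : E} (hu : u ∉ C.W) : u - C.P u ≠ 0 := by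
  intro h
  apply hu
  rw [sub_eq_zero.1 h]; exact C.P_mem u

lemma perp_norm (u : E) : ‖u - C.P u‖ ≤ ‖u‖ := by
  have := Submodule.norm_sq_eq_add_norm_sq_starProjection u C.W
  have h2 : C.Wᗮ.starProjection u = u - C.P u := by
    rw [P, ← Submodule.starProjection_orthogonal_val]
  rw [h2] at this
  have h3 := sq_nonneg ‖C.W.starProjection u‖
  exact abs_le_of_sq_le_sq' (by linarith) (norm_nonneg _) |>.2

lemma B_decomp (l : ℝ) (u : E) :
    C.B l u u = C.B l (C.P u) (C.P u) + C.B l (u - C.P u) (u - C.P u) := by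
  have h := C.B_orth l (C.P_mem u) (C.sub_P_mem u)
  have h' := C.B_symm l (u - C.P u) (C.P u)
  conv_lhs => rw [← add_sub_cancel (C.P u) u]
  simp only [map_add, _root_.add_apply] at *
  linarith

/-- Nehari-Pankov -/
def NP (l : ℝ) : Set E :=
  {u | u ∉ C.W ∧ (∀ v ∈ C.W, C.B l u v = C.I' u v) ∧ C.B l u u = C.I' u u}

lemma ne_zero_of_not_mem {u : E} (hu : u ∉ C.W) : u ≠ 0 := by
  rintro rfl; exact hu C.W.zero_mem

lemma neg_W {l : ℝ} (hl : l ∈ Ioo C.a C.b) {v : E} (hv : v ∈ C.W) : C.B l v v ≤ 0 := by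
  obtain ⟨δ, hδ, -, h⟩ := C.gap l hl
  have := h v hv
  rw [B_self]
  have : 0 ≤ δ * ‖v‖ ^ 2 := by positivity
  linarith

lemma eq_zero_W {l : ℝ} (hl : l ∈ Ioo C.a C.b) {v : E} (hv : v ∈ C.W) (h0 : 0 ≤ C.B l v v) :
    v = 0 := by
  obtain ⟨δ, hδ, -, h⟩ := C.gap l hl
  have := h v hv
  rw [B_self] at h0
  by_contra hne
  have : 0 < ‖v‖ := norm_pos_iff.2 hne
  have : 0 < δ * ‖v‖ ^ 2 := by positivity
  linarith

lemma NP_max {l : ℝ} {u : E} (hu : u ∈ C.NP l) {v : E} (hv : v ∈ C.W) {t : ℝ} (ht : 0 ≤ t) :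
    C.J l (v + t • u) ≤ C.J l u + C.B l v v / 2 := by
  obtain ⟨h1, h2, h3⟩ := hu
  have h4 := C.I4 u (C.ne_zero_of_not_mem h1) v (t - 1) (by linarith)
  have e1 : (1 + (t - 1)) = t := by ring
  rw [e1, add_comm (t • u) v] at h4
  have h5 := h2 v hv
  have h6 := C.B_symm l v u
  simp only [J, map_add, map_smul, _root_.add_apply, _root_.smul_apply,
    smul_eq_mul] at *
  rw [← h5, ← h3] at h4
  rw [h6]
  linarith

lemma NP_strict {l : ℝ} {u : E} (hu : u ∈ C.NP l) {t : ℝ} (ht : 0 ≤ t) (ht1 : t ≠ 1) :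
    C.J l (t • u) < C.J l u := by
  obtain ⟨h1, h2, h3⟩ := hu
  have h4 := C.I4s u (C.ne_zero_of_not_mem h1) (t - 1) (by linarith) (sub_ne_zero.2 ht1)
  have e1 : (1 + (t - 1)) = t := by ring
  rw [e1] at h4
  simp only [J, map_smul, _root_.smul_apply, smul_eq_mul] at *
  rw [← h3] at h4
  linarith

lemma NP_max' {l : ℝ} (hl : l ∈ Ioo C.a C.b) {u : E} (hu : u ∈ C.NP l) {v : E} (hv : v ∈ C.W)
    {t : ℝ} (ht : 0 ≤ t) : C.J l (v + t • u) ≤ C.J l u := by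
  have := C.NP_max hu hv ht
  have := C.neg_W hl hv
  linarith

lemma NP_nonneg {l : ℝ} {u : E} (hu : u ∈ C.NP l) : 0 ≤ C.J l u := by
  have := C.NP_max hu C.W.zero_mem le_rfl
  simpa [J_zero] using this

lemma wconv_P {x : ℕ → E} {y : E} (h : WConv x y) :
    Tendsto (fun j => C.P (x j)) atTop (𝓝 (C.P y)) := by
  have key : ∀ u, C.P u = ∑ i, ⟪((stdOrthonormalBasis ℝ C.W i : C.W) : E), u⟫_ℝ •
      ((stdOrthonormalBasis ℝ C.W i : C.W) : E) := by
    intro u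
    rw [P, Submodule.starProjection_apply,
      (stdOrthonormalBasis ℝ C.W).orthogonalProjectionOnto_apply_eq_sum]
    simp
  simp only [key]
  exact tendsto_finsetSum _ fun i _ => (h (innerSL ℝ _)).smul_const _

lemma wconv_add {x x' : ℕ → E} {y y' : E} (h : WConv x y) (h' : WConv x' y') :
    WConv (fun j => x j + x' j) (y + y') := by
  intro φ; simpa using (h φ).add (h' φ)

lemma wconv_smul {t : ℕ → ℝ} {s : ℝ} {x : ℕ → E} {y : E} (ht : Tendsto t atTop (𝓝 s))
    (h : WConv x y) : WConv (fun j => t j • x j) (s • y) := by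
  intro φ; simpa using ht.mul (h φ)

lemma wconv_of {x : ℕ → E} {y : E} (h : Tendsto x atTop (𝓝 y)) : WConv x y :=
  fun φ => (φ.continuous.tendsto y).comp h

lemma wconv_sub {x : ℕ → E} {y : E} (h : WConv x y) {φ : ℕ → ℕ} (hφ : StrictMono φ) :
    WConv (x ∘ φ) y := fun ψ => (h ψ).comp hφ.tendsto_atTop

/-- locally uniform gap bounds -/
lemma gap_unif {l : ℝ} (hl : l ∈ Ioo C.a C.b) : ∃ δ : ℝ, 0 < δ ∧ ∃ D : ℝ, 0 < D ∧
    ∀ m : ℝ, |m - l| < δ → (∀ w ∈ C.Wᗮ, δ * ‖w‖ ^ 2 ≤ C.B m w w) ∧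
    (∀ v ∈ C.W, C.B m v v ≤ - (δ * ‖v‖ ^ 2)) ∧ ∀ u, C.B m u u ≤ D * ‖u‖ ^ 2 := by
  obtain ⟨δ, hδ, h1, h2⟩ := C.gap l hl
  refine ⟨δ / 2, by linarith, 1 + |1 + l| + δ / 2, by positivity, fun m hm => ?_⟩
  have key : ∀ u, |(l - m) * C.h u u| ≤ δ / 2 * ‖u‖ ^ 2 := by
    intro u
    rw [abs_mul, abs_of_nonneg (C.hnonneg u), abs_sub_comm]
    exact mul_le_mul hm.le (C.hle u) (C.hnonneg u) (by linarith)
  refine ⟨fun w hw => ?_, fun v hv => ?_, fun u => ?_⟩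
  · have := h1 w hw
    have := (abs_le.1 (key w)).1
    rw [C.B_shift l m, C.B_self]; linarith
  · have := h2 v hv
    have := (abs_le.1 (key v)).2
    rw [C.B_shift l m, C.B_self]; linarith
  · have := C.B_le l u
    have := (abs_le.1 (key u)).2
    rw [C.B_shift l m]; linarith

lemma subseq {l : ℝ} (hl : l ∈ Ioo C.a C.b) {m : ℕ → ℝ} (hm : Tendsto m atTop (𝓝 l))
    {z : ℕ → E} {zi : E} (hz : WConv z zi) (hzi : zi ∉ C.W) {M : ℝ} (hM : ∀ j, ‖z j‖ ≤ M)
    {v : ℕ → E} (hv : ∀ j, v j ∈ C.W) {t : ℕ → ℝ} (ht : ∀ j, 0 ≤ t j)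
    (hJ : ∀ j, 0 ≤ C.J (m j) (v j + t j • z j)) :
    ∃ φ : ℕ → ℕ, StrictMono φ ∧ ∃ vi ∈ C.W, ∃ ti : ℝ, 0 ≤ ti ∧
      Tendsto (v ∘ φ) atTop (𝓝 vi) ∧ Tendsto (t ∘ φ) atTop (𝓝 ti) := by
  obtain ⟨δ, hδ, D, hD, hgap⟩ := C.gap_unif hl
  have hM0 : 0 ≤ M := (norm_nonneg _).trans (hM 0)
  have hev : ∀ᶠ j in atTop, |m j - l| < δ := by
    have := Metric.tendsto_nhds.1 hm δ hδ
    simpa [Real.dist_eq] using this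
  -- bound on v
  have hvb : ∀ j, |m j - l| < δ → ‖v j‖ ≤ t j * (Real.sqrt (D / δ) * M + M) := by
    intro j hj
    obtain ⟨-, g2, g3⟩ := hgap (m j) hj
    set x := v j + t j • z j with hx
    have hPx : C.P x = v j + t j • C.P (z j) := by
      have : C.P (v j) = v j := Submodule.starProjection_eq_self_iff.2 (hv j)
      rw [hx, map_add, map_smul, this]
    have hQx : x - C.P x = t j • (z j - C.P (z j)) := by
      rw [hPx, hx, smul_sub]; abel
    have h1 := C.B_decomp (m j) x
    have h2 : 0 ≤ C.B (m j) x x := by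
      have := hJ j
      have := C.I_nonneg x
      rw [J] at *; linarith
    have h3 := g2 _ (C.P_mem x)
    have h4 := g3 (x - C.P x)
    have h5 : ‖x - C.P x‖ ≤ t j * M := by
      rw [hQx, norm_smul, Real.norm_of_nonneg (ht j)]
      exact mul_le_mul_of_nonneg_left ((C.perp_norm _).trans (hM j)) (ht j)
    have h6 : ‖x - C.P x‖ ^ 2 ≤ (t j * M) ^ 2 := pow_le_pow_left₀ (norm_nonneg _) h5 2
    have h7 : δ * ‖C.P x‖ ^ 2 ≤ D * (t j * M) ^ 2 := by
      have := mul_le_mul_of_nonneg_left h6 hD.le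
      linarith
    have h8 : ‖C.P x‖ ≤ Real.sqrt (D / δ) * (t j * M) := by
      have h9 : ‖C.P x‖ ^ 2 ≤ (Real.sqrt (D / δ) * (t j * M)) ^ 2 := by
        rw [mul_pow, Real.sq_sqrt (by positivity), div_mul_eq_mul_div, le_div_iff₀ hδ]
        linarith
      have htj := ht j
      exact (abs_le_of_sq_le_sq' h9 (by positivity)).2
    have h10 : v j = C.P x - t j • C.P (z j) := by rw [hPx]; abel
    have h11 : ‖t j • C.P (z j)‖ ≤ t j * M := by
      rw [norm_smul, Real.norm_of_nonneg (ht j)]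
      exact mul_le_mul_of_nonneg_left ((C.P_norm _).trans (hM j)) (ht j)
    rw [h10]
    refine (norm_sub_le _ _).trans ?_
    linarith
  set K := Real.sqrt (D / δ) * M + M with hK
  have hK0 : 0 ≤ K := by positivity
  let v' : ℕ → C.W := fun j => ⟨(t j)⁻¹ • v j, C.W.smul_mem _ (hv j)⟩
  have hv'b : ∀ j, |m j - l| < δ → ‖v' j‖ ≤ K := by
    intro j hj
    have h := hvb j hj
    change ‖(t j)⁻¹ • v j‖ ≤ K
    rw [norm_smul, norm_inv, Real.norm_of_nonneg (ht j)]
    rcases (ht j).eq_or_lt with h0 | h0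
    · rw [← h0]; simpa using hK0
    · rw [inv_mul_le_iff₀ h0]; exact h
  have hvv' : ∀ j, |m j - l| < δ → v j = t j • ((v' j : C.W) : E) := by
    intro j hj
    have h := hvb j hj
    change v j = t j • ((t j)⁻¹ • v j)
    rcases (ht j).eq_or_lt with h0 | h0
    · rw [← h0] at h ⊢
      have : v j = 0 := norm_le_zero_iff.1 (by simpa using h)
      simp [this]
    · rw [smul_inv_smul₀ h0.ne']
  have : ProperSpace C.W := FiniteDimensional.proper_real _
  obtain ⟨w, -, φ, hφ, hw⟩ := tendsto_subseq_of_frequently_bounded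
    (Metric.isBounded_closedBall (x := (0 : C.W)) (r := K)) (x := v')
    (hev.mono fun j hj => by simpa using hv'b j hj).frequently
  have hev' := hφ.tendsto_atTop.eventually hev
  have hwE : Tendsto (fun j => ((v' (φ j) : C.W) : E)) atTop (𝓝 (w : E)) :=
    (continuous_subtype_val.tendsto w).comp hw
  set y : ℕ → E := fun j => (v' (φ j) : E) + z (φ j) with hy
  have hyw : WConv y ((w : E) + zi) := wconv_add (wconv_of hwE) (wconv_sub hz hφ)
  have hyne : (w : E) + zi ≠ 0 := by
    intro h0
    apply hzi
    rw [eq_neg_of_add_eq_zero_right h0]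
    exact C.W.neg_mem w.2
  set S := D * (K + M) ^ 2 / 2 with hS
  obtain ⟨T, hT1, hT0⟩ := (((C.Itop _ hyne).eventually_gt_atTop S).and
    (eventually_gt_atTop (0 : ℝ))).exists
  have hlim : Tendsto (fun j => C.I (T • y j) / T ^ 2) atTop
      (𝓝 (C.I (T • ((w : E) + zi)) / T ^ 2)) :=
    (C.I1 _ _ (wconv_smul tendsto_const_nhds hyw)).div_const _
  have hbd : ∀ᶠ j in atTop, t (φ j) ≤ T := by
    filter_upwards [hlim.eventually_const_lt hT1, hev'] with j h1 h2
    by_contra! h3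
    have hyj : y j ≠ 0 := by
      intro h0
      rw [h0, smul_zero, C.I0, zero_div] at h1
      have : 0 ≤ S := by positivity
      linarith
    have ht0 : 0 < t (φ j) := hT0.trans h3
    have h4 := C.Imono _ hyj (mem_Ioi.2 hT0) (mem_Ioi.2 ht0) h3.le
    have h5 := hJ (φ j)
    have h6 : v (φ j) + t (φ j) • z (φ j) = t (φ j) • y j := by
      rw [hvv' _ h2, ← smul_add]
    rw [h6, J] at h5
    have h7 := (hgap _ h2).2.2 (y j)
    have h8 : ‖y j‖ ≤ K + M := (norm_add_le _ _).trans (add_le_add (hv'b _ h2) (hM _))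
    have h9 : ‖y j‖ ^ 2 ≤ (K + M) ^ 2 := pow_le_pow_left₀ (norm_nonneg _) h8 2
    have h10 : C.I (t (φ j) • y j) / t (φ j) ^ 2 ≤ S := by
      rw [div_le_iff₀ (by positivity)]
      simp only [map_smul, _root_.smul_apply, smul_eq_mul] at h5
      have h11 : C.B (m (φ j)) (y j) (y j) ≤ D * (K + M) ^ 2 :=
        h7.trans (mul_le_mul_of_nonneg_left h9 hD.le)
      have := mul_le_mul_of_nonneg_left h11 (sq_nonneg (t (φ j)))
      rw [hS]
      linarith
    simp only at h4
    linarith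
  obtain ⟨ti, hti, ψ, hψ, hψt⟩ := tendsto_subseq_of_frequently_bounded
    (Metric.isBounded_Icc (0 : ℝ) T) (x := fun j => t (φ j))
    (hbd.mono fun j hj => ⟨ht _, hj⟩).frequently
  rw [isClosed_Icc.closure_eq] at hti
  refine ⟨φ ∘ ψ, hφ.comp hψ, ti • (w : E), C.W.smul_mem _ w.2, ti, hti.1, ?_, hψt⟩
  have h1 : Tendsto (fun j => t (φ (ψ j)) • ((v' (φ (ψ j)) : C.W) : E)) atTop
      (𝓝 (ti • (w : E))) := hψt.smul (hwE.comp hψ.tendsto_atTop)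
  refine h1.congr' ?_
  filter_upwards [hψ.tendsto_atTop.eventually hev'] with j hj
  exact (hvv' _ hj).symm

lemma exists_pos {l : ℝ} (hl : l ∈ Ioo C.a C.b) {u : E} (hu : u ∉ C.W) :
    ∃ v ∈ C.W, ∃ t : ℝ, 0 ≤ t ∧ 0 < C.J l (v + t • u) := by
  obtain ⟨δ, hδ, D, hD, hgap⟩ := C.gap_unif hl
  obtain ⟨g1, -⟩ := hgap l (by simpa using hδ)
  have hne := C.sub_P_ne hu
  have hp := g1 _ (C.sub_P_mem u)
  have hn : 0 < ‖u - C.P u‖ := norm_pos_iff.2 hne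
  have hq : 0 < C.B l (u - C.P u) (u - C.P u) / 2 := by
    have : 0 < δ * ‖u - C.P u‖ ^ 2 := by positivity
    linarith
  obtain ⟨t, h1, h2⟩ := (((C.Izero _ hne).eventually_lt_const hq).and self_mem_nhdsWithin).exists
  have ht : 0 < t := h2
  refine ⟨-(t • C.P u), C.W.neg_mem (C.W.smul_mem _ (C.P_mem u)), t, ht.le, ?_⟩
  have e : -(t • C.P u) + t • u = t • (u - C.P u) := by rw [smul_sub]; abel
  rw [e, J]
  rw [div_lt_iff₀ (by positivity)] at h1
  simp only [map_smul, _root_.smul_apply, smul_eq_mul]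
  linarith

lemma exists_max {l : ℝ} (hl : l ∈ Ioo C.a C.b) {u : E} (hu : u ∉ C.W) :
    ∃ v ∈ C.W, ∃ t : ℝ, 0 ≤ t ∧ ∀ v' ∈ C.W, ∀ t' : ℝ, 0 ≤ t' →
      C.J l (v' + t' • u) ≤ C.J l (v + t • u) := by
  obtain ⟨f, hfd⟩ : ∃ f : C.W × ℝ → ℝ, ∀ p, f p = C.J l ((p.1 : E) + p.2 • u) :=
    ⟨_, fun _ => rfl⟩
  have hf : Continuous f := by
    have : f = fun p => C.J l ((p.1 : E) + p.2 • u) := funext hfd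
    rw [this]
    exact (C.J_cont l).comp (by fun_prop)
  have hAc : IsClosed {p : C.W × ℝ | 0 ≤ p.2 ∧ 0 ≤ f p} := by
    apply IsClosed.inter
    · exact isClosed_le continuous_const continuous_snd
    · exact isClosed_le continuous_const hf
  have hA : IsCompact {p : C.W × ℝ | 0 ≤ p.2 ∧ 0 ≤ f p} := by
    apply IsSeqCompact.isCompact
    intro x hx
    obtain ⟨φ, hφ, vi, hvi, ti, hti, h1, h2⟩ := C.subseq hl (m := fun _ => l)
      tendsto_const_nhds (z := fun _ => u) (zi := u) (wconv_of tendsto_const_nhds) hu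
      (M := ‖u‖) (fun _ => le_rfl) (v := fun j => ((x j).1 : E)) (fun j => (x j).1.2)
      (t := fun j => (x j).2) (fun j => (hx j).1) (fun j => by
        have := (hx j).2
        rw [hfd] at this
        exact this)
    have h3 : Tendsto (x ∘ φ) atTop (𝓝 ((⟨vi, hvi⟩ : C.W), ti)) := by
      refine Tendsto.prodMk_nhds ?_ h2
      exact tendsto_subtype_rng.2 h1
    exact ⟨_, hAc.mem_of_tendsto h3 (Eventually.of_forall fun j => hx _), φ, hφ, h3⟩
  have hne : {p : C.W × ℝ | 0 ≤ p.2 ∧ 0 ≤ f p}.Nonempty := by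
    refine ⟨((0 : C.W), (0 : ℝ)), le_rfl, ?_⟩
    rw [hfd]
    simp [J_zero]
  obtain ⟨p, hpA, hpm⟩ := hA.exists_isMaxOn hne hf.continuousOn
  have hpm' := isMaxOn_iff.1 hpm
  have hp2 : 0 ≤ f p := hpA.2
  refine ⟨p.1, p.1.2, p.2, hpA.1, ?_⟩
  intro v hv t ht
  rw [← hfd]
  by_cases h : 0 ≤ C.J l (v + t • u)
  · have e : f ((⟨v, hv⟩ : C.W), t) = C.J l (v + t • u) := hfd _
    rw [← e] at h ⊢
    exact hpm' _ ⟨ht, h⟩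
  · exact (le_of_not_ge h).trans hp2

lemma hasDerivAt_quad (a b c : ℝ) :
    HasDerivAt (fun s : ℝ => a + s * b + s ^ 2 * c) b 0 := by
  have h1 : HasDerivAt (fun s : ℝ => s * b) (1 * b) 0 := (hasDerivAt_id' (0 : ℝ)).mul_const b
  have h2 : HasDerivAt (fun s : ℝ => s ^ 2) (((2 : ℕ) : ℝ) * 0 ^ (2 - 1)) 0 :=
    hasDerivAt_pow 2 (0 : ℝ)
  have h3 : HasDerivAt (fun s : ℝ => a + s * b + s ^ 2 * c)
      (1 * b + ((2 : ℕ) : ℝ) * 0 ^ (2 - 1) * c) 0 := (h1.const_add a).fun_add (h2.mul_const c)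
  have e : 1 * b + ((2 : ℕ) : ℝ) * 0 ^ (2 - 1) * c = b := by simp
  rwa [e] at h3

lemma exists_NP {l : ℝ} (hl : l ∈ Ioo C.a C.b) {u : E} (hu : u ∉ C.W) :
    ∃ v ∈ C.W, ∃ t : ℝ, 0 < t ∧ v + t • u ∈ C.NP l := by
  obtain ⟨p1, hp1, p2, hp2, hmax⟩ := C.exists_max hl hu
  obtain ⟨v1, hv1, t1, ht1, hpos⟩ := C.exists_pos hl hu
  have hfp : 0 < C.J l (p1 + p2 • u) := hpos.trans_le (hmax v1 hv1 t1 ht1)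
  have htp : 0 < p2 := by
    rcases hp2.eq_or_lt with h | h
    · exfalso
      have h1 : C.J l (p1 + p2 • u) = C.J l p1 := by simp [← h]
      have h2 := C.neg_W hl hp1
      have h3 := C.I_nonneg p1
      rw [h1, J] at hfp
      linarith
    · exact h
  refine ⟨p1, hp1, p2, htp, ?_⟩
  set x : E := p1 + p2 • u with hx
  have hder : ∀ v ∈ C.W, ∀ r : ℝ, C.B l x (v + r • u) = C.I' x (v + r • u) := by
    intro v hv r
    set w := v + r • u with hw
    have hd1 : HasDerivAt (fun s : ℝ => C.I (x + s • w)) (C.I' x w) 0 := by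
      have h1 : HasDerivAt (fun s : ℝ => x + s • w) w 0 := by
        simpa using ((hasDerivAt_id (0 : ℝ)).smul_const w).const_add x
      have h2 : HasFDerivAt C.I (C.I' x) (x + (0 : ℝ) • w) := by simpa using C.hd x
      exact h2.comp_hasDerivAt (0 : ℝ) h1
    have hd2 : HasDerivAt (fun s : ℝ => C.B l (x + s • w) (x + s • w) / 2) (C.B l x w) 0 := by
      have h0 := C.B_symm l w x
      have e : (fun s : ℝ => C.B l (x + s • w) (x + s • w) / 2) =
          fun s : ℝ => C.B l x x / 2 + s * C.B l x w + s ^ 2 * (C.B l w w / 2) := by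
        funext s
        simp only [map_add, map_smul, _root_.smul_apply, _root_.add_apply, smul_eq_mul, h0]
        ring
      rw [e]
      exact hasDerivAt_quad _ _ _
    have hd3 := hd2.sub hd1
    have hloc : IsLocalMax (fun s : ℝ => C.J l (x + s • w)) 0 := by
      have h1 : ∀ᶠ s : ℝ in 𝓝 0, 0 < p2 + s * r := by
        have : Tendsto (fun s : ℝ => p2 + s * r) (𝓝 0) (𝓝 (p2 + 0 * r)) :=
          (Continuous.tendsto (by fun_prop) 0)
        rw [zero_mul, add_zero] at this
        exact this.eventually_const_lt htp
      filter_upwards [h1] with s hs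
      have e1 : x + s • w = (p1 + s • v) + (p2 + s * r) • u := by
        rw [hx, hw, smul_add, add_smul, mul_smul]; abel
      have := hmax _ (C.W.add_mem hp1 (C.W.smul_mem s hv)) _ hs.le
      rw [← e1] at this
      simpa [← hx] using this
    have := hloc.hasDerivAt_eq_zero hd3
    linarith
  refine ⟨?_, ?_, ?_⟩
  · intro hxW
    apply hu
    have h1 : p2 • u ∈ C.W := by
      have := C.W.sub_mem hxW hp1
      rwa [hx, add_sub_cancel_left] at this
    exact (C.W.smul_mem_iff htp.ne').1 h1
  · intro v hv
    simpa using hder v hv 0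
  · exact hder _ hp1 _

noncomputable def c (l : ℝ) : ℝ := sInf (C.J l '' C.NP l)

lemma c_le {l : ℝ} {u : E} (hu : u ∈ C.NP l) : C.c l ≤ C.J l u :=
  csInf_le ⟨0, by rintro _ ⟨x, hx, rfl⟩; exact C.NP_nonneg hx⟩ (mem_image_of_mem _ hu)

lemma NP_nonempty {l : ℝ} (hl : l ∈ Ioo C.a C.b) : (C.NP l).Nonempty := by
  obtain ⟨v, -, t, -, h⟩ := C.exists_NP hl C.he
  exact ⟨_, h⟩

lemma c_le_shift {l m : ℝ} (hl : l ∈ Ioo C.a C.b) {u v : E} (hu : u ∈ C.NP l) (hv : v ∈ C.W)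
    {t : ℝ} (ht : 0 ≤ t) (h : v + t • u ∈ C.NP m) :
    C.c m ≤ C.J l u + (l - m) / 2 * C.h (v + t • u) (v + t • u) := by
  have h1 := C.c_le h
  have h2 := C.NP_max' hl hu hv ht
  rw [C.J_shift l m] at h1
  linarith

lemma c_anti {l m : ℝ} (hl : l ∈ Ioo C.a C.b) (hm : m ∈ Ioo C.a C.b) (hlm : l ≤ m) :
    C.c m ≤ C.c l := by
  apply le_csInf ((C.NP_nonempty hl).image _)
  rintro _ ⟨u, hu, rfl⟩
  obtain ⟨v, hv, t, ht, h⟩ := C.exists_NP hm hu.1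
  have h1 := C.c_le_shift hl hu hv ht.le h
  have h2 := mul_nonneg (sub_nonneg.2 hlm) (C.hnonneg (v + t • u))
  linarith

lemma lsc {l : ℝ} (hl : l ∈ Ioo C.a C.b) {x : ℕ → E} {y : E} (hx : WConv x y) {r : ℕ → ℝ} {s : ℝ}
    (hr : Tendsto r atTop (𝓝 s)) (h : ∀ j, C.J l (x j) ≤ r j) : C.J l y ≤ s := by
  obtain ⟨δ, hδ, D, hD, hgap⟩ := C.gap_unif hl
  obtain ⟨g1, -⟩ := hgap l (by simpa using hδ)
  have hP : Tendsto (fun j => C.P (x j - y)) atTop (𝓝 0) := by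
    have := (C.wconv_P hx).sub_const (C.P y)
    simpa using this
  have hPB : Tendsto (fun j => C.B l (C.P (x j - y)) (C.P (x j - y))) atTop (𝓝 0) := by
    have := ((C.B_cont l).tendsto 0).comp hP
    simpa [Function.comp_def] using this
  have hlin : Tendsto (fun j => C.B l y (x j)) atTop (𝓝 (C.B l y y)) := hx (C.B l y)
  have hI := C.I1 _ _ hx
  have htot := ((((hlin.const_mul 2).sub_const (C.B l y y)).add hPB).div_const 2).sub hI
  have e : (2 * C.B l y y - C.B l y y + 0) / 2 - C.I y = C.J l y := by rw [J]; ring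
  rw [e] at htot
  refine le_of_tendsto_of_tendsto' htot hr fun j => le_trans ?_ (h j)
  have h1 := C.B_decomp l (x j - y)
  have h2 := g1 _ (C.sub_P_mem (x j - y))
  have h3 : 0 ≤ δ * ‖x j - y - C.P (x j - y)‖ ^ 2 := by positivity
  have h4 : C.B l (x j - y) (x j - y) = C.B l (x j) (x j) - 2 * C.B l y (x j) + C.B l y y := by
    have := C.B_symm l (x j) y
    simp only [map_sub, _root_.sub_apply]
    linarith
  rw [J]
  linarith

lemma cpt {l : ℝ} (hl : l ∈ Ioo C.a C.b) {m : ℕ → ℝ} (hm : Tendsto m atTop (𝓝 l))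
    (hmg : ∀ j, m j ∈ Ioo C.a C.b)
    {u : ℕ → E} (hu : ∀ j, u j ∈ C.NP (m j)) {K : ℝ} (hK : ∀ j, C.J (m j) (u j) ≤ K) :
    ∃ φ : ℕ → ℕ, StrictMono φ ∧ ∃ (z : ℕ → E) (zi : E), WConv z zi ∧ zi ∉ C.W ∧
      (∀ j, ‖z j‖ ≤ 1) ∧ (∀ j, z j ∉ C.W) ∧
      ∀ j, ∃ p ∈ C.W, ∃ r : ℝ, 0 ≤ r ∧ z j = p + r • u (φ j) := by
  obtain ⟨δ, hδ, D, hD, hgap⟩ := C.gap_unif hl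
  have hev : ∀ᶠ j in atTop, |m j - l| < δ := by
    have := Metric.tendsto_nhds.1 hm δ hδ
    simpa [Real.dist_eq] using this
  let w : ℕ → E := fun j => ‖u j - C.P (u j)‖⁻¹ • (u j - C.P (u j))
  have hw1 : ∀ j, ‖w j‖ = 1 := fun j => by
    have := C.sub_P_ne (hu j).1
    simp only [w]
    rw [norm_smul, norm_inv, norm_norm, inv_mul_cancel₀ (norm_ne_zero_iff.2 this)]
  have hwp : ∀ j, w j ∈ C.Wᗮ := fun j => C.Wᗮ.smul_mem _ (C.sub_P_mem _)
  have hwF : ∀ j, ∃ p ∈ C.W, ∃ r : ℝ, 0 ≤ r ∧ w j = p + r • u j := fun j =>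
    ⟨-(‖u j - C.P (u j)‖⁻¹ • C.P (u j)), C.W.neg_mem (C.W.smul_mem _ (C.P_mem _)),
      ‖u j - C.P (u j)‖⁻¹, by positivity, by simp only [w]; rw [smul_sub]; abel⟩
  have hWperp : ∀ x : E, x ∈ C.Wᗮ → x ∈ C.W → x = 0 := fun x h1 h2 =>
    inner_self_eq_zero.1 ((Submodule.mem_orthogonal _ _).1 h1 x h2)
  obtain ⟨φ, y, hφ, hy⟩ := C.ws w 1 (fun j => (hw1 j).le)
  have hyp : y ∈ C.Wᗮ := by
    rw [Submodule.mem_orthogonal]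
    intro v hv
    have h1 := hy (innerSL ℝ v)
    have h2 : (fun j => innerSL ℝ v ((w ∘ φ) j)) = fun _ => (0 : ℝ) := by
      funext j
      exact (Submodule.mem_orthogonal _ _).1 (hwp (φ j)) v hv
    rw [h2] at h1
    exact (tendsto_nhds_unique h1 tendsto_const_nhds)
  refine ⟨φ, hφ, w ∘ φ, y, hy, ?_, fun j => (hw1 _).le, ?_, fun j => hwF _⟩
  · intro hyW
    have hy0 := hWperp y hyp hyW
    have key : ∀ s : ℝ, 0 ≤ s → s ^ 2 * δ / 2 ≤ K := by
      intro s hs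
      have h1 : Tendsto (fun j => s ^ 2 * δ / 2 - C.I (s • (w ∘ φ) j)) atTop
          (𝓝 (s ^ 2 * δ / 2 - C.I (s • y))) :=
        (C.I1 _ _ (wconv_smul tendsto_const_nhds hy)).const_sub _
      rw [hy0, smul_zero, C.I0, sub_zero] at h1
      refine le_of_tendsto h1 ?_
      filter_upwards [hφ.tendsto_atTop.eventually hev] with j hj
      obtain ⟨p, hp, r, hr, hpr⟩ := hwF (φ j)
      have h2 := C.NP_max' (hmg (φ j)) (hu (φ j)) (C.W.smul_mem s hp) (mul_nonneg hs hr)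
      have h3 : s • p + (s * r) • u (φ j) = s • w (φ j) := by rw [hpr, smul_add, mul_smul]
      rw [h3, J] at h2
      have h4 := (hgap _ hj).1 _ (hwp (φ j))
      rw [hw1] at h4
      have h5 := hK (φ j)
      have h6 := mul_le_mul_of_nonneg_left h4 (sq_nonneg s)
      simp only [map_smul, _root_.smul_apply, smul_eq_mul] at h2
      simp only [Function.comp]
      linarith
    have hK0 : 0 ≤ K := by simpa using key 0 le_rfl
    have h7 := key (2 * (K + 1) / δ + 1) (by positivity)
    have h8 : 2 * (K + 1) / δ * δ = 2 * (K + 1) := div_mul_cancel₀ _ hδ.ne'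
    have h9 : 0 ≤ 2 * (K + 1) / δ := by positivity
    nlinarith [mul_nonneg h9 hδ.le, mul_nonneg (mul_nonneg h9 h9) hδ.le]
  · intro j hj
    have := hWperp _ (hwp (φ j)) hj
    have h1 := hw1 (φ j)
    rw [this, norm_zero] at h1
    norm_num at h1

lemma exists_min {l : ℝ} (hl : l ∈ Ioo C.a C.b) : ∃ u ∈ C.NP l, C.J l u = C.c l := by
  have hne := (C.NP_nonempty hl).image (C.J l)
  have hbb : BddBelow (C.J l '' C.NP l) :=
    ⟨0, by rintro _ ⟨x, hx, rfl⟩; exact C.NP_nonneg hx⟩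
  have h1 : ∀ j : ℕ, ∃ u ∈ C.NP l, C.J l u < C.c l + 1 / ((j : ℝ) + 1) := by
    intro j
    have hp : (0 : ℝ) < 1 / ((j : ℝ) + 1) := by positivity
    obtain ⟨_, ⟨u, hu, rfl⟩, h⟩ := exists_lt_of_csInf_lt hne
      (show sInf (C.J l '' C.NP l) < C.c l + 1 / ((j : ℝ) + 1) from by
        change C.c l < _; linarith)
    exact ⟨u, hu, h⟩
  choose u hu hlt using h1
  have hlim : Tendsto (fun j : ℕ => C.c l + 1 / ((j : ℝ) + 1)) atTop (𝓝 (C.c l)) := by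
    simpa using (tendsto_one_div_add_atTop_nhds_zero_nat (𝕜 := ℝ)).const_add (C.c l)
  obtain ⟨φ, hφ, z, zi, hz, hzi, -, -, hF⟩ := C.cpt hl (m := fun _ => l) tendsto_const_nhds
    (fun _ => hl) hu (K := C.c l + 1) (fun j => (hlt j).le.trans (by
      have : 1 / ((j : ℝ) + 1) ≤ 1 := by
        rw [div_le_one (by positivity)]; linarith [(Nat.cast_nonneg j : (0 : ℝ) ≤ j)]
      linarith))
  obtain ⟨v, hv, t, ht, hNP⟩ := C.exists_NP hl hzi
  refine ⟨_, hNP, le_antisymm ?_ (C.c_le hNP)⟩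
  refine C.lsc hl (wconv_add (wconv_of (tendsto_const_nhds (x := v)))
    (wconv_smul (tendsto_const_nhds (x := t)) hz)) (hlim.comp hφ.tendsto_atTop) fun j => ?_
  obtain ⟨p, hp, r, hr, hpr⟩ := hF j
  have h2 := C.NP_max' hl (hu (φ j)) (C.W.add_mem hv (C.W.smul_mem t hp)) (mul_nonneg ht.le hr)
  have h3 : v + t • z j = v + t • p + (t * r) • u (φ j) := by
    rw [hpr, smul_add, mul_smul, add_assoc]
  rw [h3]
  exact h2.trans (hlt _).le

lemma exists_seq {l : ℝ} {p : ℝ → ℕ → Prop} (h : ∀ η > 0, ∀ j, ∃ m, |m - l| < η ∧ p m j) :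
    ∃ m : ℕ → ℝ, Tendsto m atTop (𝓝 l) ∧ ∀ j, p (m j) j := by
  choose m hm hp using fun j : ℕ => h (1 / ((j : ℝ) + 1)) (by positivity) j
  refine ⟨m, ?_, hp⟩
  rw [tendsto_iff_dist_tendsto_zero]
  exact squeeze_zero (fun _ => dist_nonneg) (fun j => (hm j).le)
    tendsto_one_div_add_atTop_nhds_zero_nat

lemma conv {l : ℝ} (hl : l ∈ Ioo C.a C.b) {u : E} (hu : u ∈ C.NP l) {ε : ℝ} (hε : 0 < ε) :
    ∃ η > 0, ∀ m ∈ Ioo C.a C.b, |m - l| < η → ∀ v ∈ C.W, ∀ t : ℝ, 0 < t → v + t • u ∈ C.NP m →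
      |C.h (v + t • u) (v + t • u) - C.h u u| < ε := by
  by_contra! hcon
  obtain ⟨m, hm, hp⟩ := exists_seq (l := l) (p := fun m _ => m ∈ Ioo C.a C.b ∧
    ∃ v ∈ C.W, ∃ t : ℝ, 0 < t ∧ v + t • u ∈ C.NP m ∧
      ε ≤ |C.h (v + t • u) (v + t • u) - C.h u u|) (by
    intro η hη j
    obtain ⟨m, h1, h2, v, hv, t, ht, h3⟩ := hcon η hη
    exact ⟨m, h2, h1, v, hv, t, ht, h3⟩)
  choose hmg v hv t ht hNP hbad using hp
  obtain ⟨φ, hφ, vi, hvi, ti, hti, hvl, htl⟩ := C.subseq hl hm (z := fun _ => u) (zi := u)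
    (wconv_of tendsto_const_nhds) hu.1 (M := ‖u‖) (fun _ => le_rfl) hv (fun j => (ht j).le)
    (fun j => C.NP_nonneg (hNP j))
  have hx : Tendsto (fun j => v (φ j) + t (φ j) • u) atTop (𝓝 (vi + ti • u)) :=
    hvl.add (htl.smul_const u)
  have hxh := (C.h_cont.tendsto _).comp hx
  have hge : C.J l u ≤ C.J l (vi + ti • u) := by
    have hm' := hm.comp hφ.tendsto_atTop
    have h1 : Tendsto (fun j => C.J l u + (l - m (φ j)) / 2 * C.h u u) atTop
        (𝓝 (C.J l u + (l - l) / 2 * C.h u u)) :=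
      (((hm'.const_sub l).div_const 2).mul_const _).const_add _
    have h2 : Tendsto (fun j => C.J l (v (φ j) + t (φ j) • u) + (l - m (φ j)) / 2 *
        C.h (v (φ j) + t (φ j) • u) (v (φ j) + t (φ j) • u)) atTop
        (𝓝 (C.J l (vi + ti • u) + (l - l) / 2 * C.h (vi + ti • u) (vi + ti • u))) :=
      (((C.J_cont l).tendsto _).comp hx).add (((hm'.const_sub l).div_const 2).mul hxh)
    have h3 := le_of_tendsto_of_tendsto' h1 h2 fun j => by
      rw [← C.J_shift, ← C.J_shift]
      have h4 := C.NP_max' (hmg (φ j)) (hNP (φ j))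
        (C.W.neg_mem (C.W.smul_mem (t (φ j))⁻¹ (hv (φ j)))) (inv_nonneg.2 (ht (φ j)).le)
      have h5 : -((t (φ j))⁻¹ • v (φ j)) + (t (φ j))⁻¹ • (v (φ j) + t (φ j) • u) = u := by
        rw [smul_add, inv_smul_smul₀ (ht _).ne']; abel
      rwa [h5] at h4
    simpa using h3
  have hv0 : vi = 0 := by
    have := C.NP_max hu hvi hti
    exact C.eq_zero_W hl hvi (by linarith)
  have ht1 : ti = 1 := by
    by_contra hne
    have := C.NP_strict hu hti hne
    rw [hv0, zero_add] at hge
    linarith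
  rw [hv0, ht1, zero_add, one_smul] at hxh
  have h6 : Tendsto (fun j => |C.h (v (φ j) + t (φ j) • u) (v (φ j) + t (φ j) • u) - C.h u u|)
      atTop (𝓝 |C.h u u - C.h u u|) := (hxh.sub_const _).abs
  rw [sub_self, abs_zero] at h6
  have := ge_of_tendsto' h6 fun j => hbad (φ j)
  linarith

lemma right_lip {l : ℝ} (hl : l ∈ Ioo C.a C.b) :
    ∃ K : ℝ, ∃ η > 0, ∀ m ∈ Ioo C.a C.b, l < m → |m - l| < η → C.c l - C.c m ≤ K * (m - l) := by
  by_contra! hcon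
  obtain ⟨m, hm, hp⟩ := exists_seq (l := l) (p := fun m j => m ∈ Ioo C.a C.b ∧ l < m ∧
    (j : ℝ) * (m - l) < C.c l - C.c m) (by
    intro η hη j
    obtain ⟨m, h1, h2, h3, h4⟩ := hcon j η hη
    exact ⟨m, h3, h1, h2, h4⟩)
  choose hmg hlm hbad using hp
  choose u hu huc using fun j => C.exists_min (hmg j)
  obtain ⟨φ, hφ, z, zi, hz, hzi, hz1, hzW, hF⟩ := C.cpt hl hm hmg hu (K := C.c l)
    (fun j => (huc j).le.trans (C.c_anti hl (hmg j) (hlm j).le))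
  choose v hv t ht hNP using fun j => C.exists_NP hl (hzW j)
  obtain ⟨ψ, hψ, vi, hvi, ti, hti, hvl, htl⟩ := C.subseq hl (m := fun _ => l) tendsto_const_nhds
    hz hzi hz1 hv (fun j => (ht j).le) (fun j => C.NP_nonneg (hNP j))
  have hev1 : ∀ᶠ j in atTop, ‖v (ψ j)‖ < ‖vi‖ + 1 :=
    hvl.norm.eventually_lt_const (by linarith)
  have hev2 : ∀ᶠ j in atTop, t (ψ j) < ti + 1 := htl.eventually_lt_const (by linarith)
  obtain ⟨N, hN⟩ := exists_nat_gt ((‖vi‖ + 1 + (ti + 1)) ^ 2)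
  obtain ⟨j, h1, h2, h3⟩ := (hev1.and (hev2.and (eventually_ge_atTop N))).exists
  set x := v (ψ j) + t (ψ j) • z (ψ j) with hx
  set k := φ (ψ j) with hk
  have hkN : (N : ℝ) ≤ k := by
    have : N ≤ k := h3.trans ((hψ.id_le j).trans (hφ.id_le _))
    exact_mod_cast this
  have hxn : ‖x‖ ≤ ‖vi‖ + 1 + (ti + 1) := by
    refine (norm_add_le _ _).trans (add_le_add h1.le ?_)
    rw [norm_smul, Real.norm_of_nonneg (ht _).le]
    calc t (ψ j) * ‖z (ψ j)‖ ≤ t (ψ j) * 1 := mul_le_mul_of_nonneg_left (hz1 _) (ht _).le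
      _ ≤ _ := by linarith
  have hxh : C.h x x ≤ k := by
    have := pow_le_pow_left₀ (norm_nonneg x) hxn 2
    have := C.hle x
    linarith
  have h4 := C.c_le (hNP (ψ j))
  rw [← hx, C.J_shift (m k) l] at h4
  obtain ⟨p, hp, r, hr, hpr⟩ := hF (ψ j)
  have h5 := C.NP_max' (hmg k) (hu k) (C.W.add_mem (hv (ψ j)) (C.W.smul_mem (t (ψ j)) hp))
    (mul_nonneg (ht (ψ j)).le hr)
  have h6 : x = v (ψ j) + t (ψ j) • p + (t (ψ j) * r) • u k := by
    rw [hx, hpr, smul_add, mul_smul, add_assoc]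
  rw [← h6, huc] at h5
  have h7 := hbad k
  have h8 := hlm k
  have h9 := mul_le_mul_of_nonneg_left hxh (sub_nonneg.2 h8.le)
  have h10 := mul_nonneg (sub_nonneg.2 h8.le) (C.hnonneg x)
  linarith

lemma left_est {l : ℝ} (hl : l ∈ Ioo C.a C.b) {u : E} (hu : u ∈ C.NP l) (huc : C.J l u = C.c l)
    {ε : ℝ} (hε : 0 < ε) : ∃ η > 0, ∀ m ∈ Ioo C.a C.b, |m - l| < η →
      (m < l → C.c m - C.c l ≤ (l - m) * (C.h u u / 2 + ε)) ∧
      (l < m → (m - l) * (C.h u u / 2 - ε) ≤ C.c l - C.c m) := by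
  obtain ⟨η, hη, hc⟩ := C.conv hl hu hε
  refine ⟨η, hη, fun m hm hml => ?_⟩
  obtain ⟨v, hv, t, ht, hNP⟩ := C.exists_NP hm hu.1
  have h1 := abs_lt.1 (hc m hm hml v hv t ht hNP)
  have h2 := C.c_le_shift hl hu hv ht.le hNP
  constructor
  · intro h3
    have := mul_le_mul_of_nonneg_left h1.2.le (sub_nonneg.2 h3.le)
    have := mul_nonneg (sub_nonneg.2 h3.le) hε.le
    linarith
  · intro h3
    have := mul_le_mul_of_nonneg_left h1.1.le (sub_nonneg.2 h3.le)
    have := mul_nonneg (sub_nonneg.2 h3.le) hε.le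
    linarith

lemma c_cont {l : ℝ} (hl : l ∈ Ioo C.a C.b) : ContinuousAt C.c l := by
  obtain ⟨u, hu, huc⟩ := C.exists_min hl
  obtain ⟨η1, hη1, h1⟩ := C.left_est hl hu huc one_pos
  obtain ⟨K, η2, hη2, h2⟩ := C.right_lip hl
  set L := max (C.h u u / 2 + 1) K with hL
  have hlip : ∀ᶠ m in 𝓝 l, |C.c m - C.c l| ≤ L * |m - l| := by
    filter_upwards [Ioo_mem_nhds hl.1 hl.2, Metric.ball_mem_nhds l hη1,
      Metric.ball_mem_nhds l hη2] with m hm hb1 hb2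
    rw [Metric.mem_ball, Real.dist_eq] at hb1 hb2
    rcases lt_trichotomy m l with h | h | h
    · have h3 := (h1 m hm hb1).1 h
      have h4 := C.c_anti hm hl h.le
      rw [abs_of_nonneg (by linarith), abs_of_neg (by linarith)]
      have := mul_le_mul_of_nonneg_left (le_max_left (C.h u u / 2 + 1) K) (sub_nonneg.2 h.le)
      rw [← hL] at this
      linarith
    · simp [h]
    · have h3 := h2 m hm h hb2
      have h4 := C.c_anti hl hm h.le
      rw [abs_of_nonpos (by linarith), abs_of_pos (by linarith)]
      have := mul_le_mul_of_nonneg_left (le_max_right (C.h u u / 2 + 1) K) (sub_nonneg.2 h.le)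
      rw [← hL] at this
      linarith
  rw [ContinuousAt, tendsto_iff_dist_tendsto_zero]
  refine squeeze_zero' (Eventually.of_forall fun _ => dist_nonneg) hlip ?_
  have : Tendsto (fun m : ℝ => L * |m - l|) (𝓝 l) (𝓝 (L * |l - l|)) :=
    Continuous.tendsto (by fun_prop) l
  simpa using this

lemma eventually_right {p : ℝ → Prop} {η : ℝ} (hη : 0 < η) (h : ∀ ε, 0 < ε → ε < η → p ε) :
    ∀ᶠ ε in 𝓝[>] (0 : ℝ), p ε := by
  filter_upwards [Ioo_mem_nhdsGT hη] with ε hε using h ε hε.1 hε.2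

lemma limsup_bound {l : ℝ} (hl : l ∈ Ioo C.a C.b) {u : E} (hu : u ∈ C.NP l)
    (huc : C.J l u = C.c l) :
    Filter.limsup (fun ε : ℝ => (C.c (l - ε) - C.c l) / ε) (𝓝[>] 0) ≤ C.h u u / 2 := by
  apply le_of_forall_pos_le_add
  intro ε hε
  obtain ⟨η, hη, h1⟩ := C.left_est hl hu huc hε
  have hη' : 0 < min η (l - C.a) := lt_min hη (sub_pos.2 hl.1)
  have hg : ∀ x, 0 < x → x < min η (l - C.a) → l - x ∈ Ioo C.a C.b ∧ |l - x - l| < η := by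
    intro x hx hx'
    have h2 := lt_min_iff.1 hx'
    refine ⟨⟨by linarith, by linarith [hl.2]⟩, ?_⟩
    rw [sub_sub_cancel_left, abs_neg, abs_of_pos hx]; exact h2.1
  apply limsup_le_of_le
  · apply IsBoundedUnder.isCoboundedUnder_le
    refine ⟨0, ?_⟩
    rw [eventually_map]
    refine eventually_right hη' fun x hx hx' => ?_
    have := C.c_anti (hg x hx hx').1 hl (by linarith)
    exact div_nonneg (by linarith) hx.le
  · refine eventually_right hη' fun x hx hx' => ?_
    have h3 := (h1 _ (hg x hx hx').1 (hg x hx hx').2).1 (by linarith)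
    rw [div_le_iff₀ hx]
    linarith

lemma liminf_bound {l : ℝ} (hl : l ∈ Ioo C.a C.b) {u : E} (hu : u ∈ C.NP l)
    (huc : C.J l u = C.c l) :
    C.h u u / 2 ≤ Filter.liminf (fun ε : ℝ => (C.c l - C.c (l + ε)) / ε) (𝓝[>] 0) := by
  apply le_of_forall_sub_le
  intro ε hε
  obtain ⟨η, hη, h1⟩ := C.left_est hl hu huc hε
  obtain ⟨K, η2, hη2, h2⟩ := C.right_lip hl
  have hη' : 0 < min (min η η2) (C.b - l) := lt_min (lt_min hη hη2) (sub_pos.2 hl.2)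
  have hg : ∀ x, 0 < x → x < min (min η η2) (C.b - l) →
      l + x ∈ Ioo C.a C.b ∧ |l + x - l| < η ∧ |l + x - l| < η2 := by
    intro x hx hx'
    have h3 := lt_min_iff.1 hx'
    have h4 := lt_min_iff.1 h3.1
    refine ⟨⟨by linarith [hl.1], by linarith⟩, ?_⟩
    rw [add_sub_cancel_left, abs_of_pos hx]; exact h4
  apply le_liminf_of_le
  · apply IsBoundedUnder.isCoboundedUnder_ge
    refine ⟨K, ?_⟩
    rw [eventually_map]
    refine eventually_right hη' fun x hx hx' => ?_
    have h3 := h2 _ (hg x hx hx').1 (by linarith) (hg x hx hx').2.2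
    change (C.c l - C.c (l + x)) / x ≤ K
    rw [div_le_iff₀ hx]
    linarith
  · refine eventually_right hη' fun x hx hx' => ?_
    have h3 := (h1 _ (hg x hx hx').1 (hg x hx hx').2.1).2 (by linarith)
    rw [le_div_iff₀ hx]
    linarith

end Ctx

/-- The spectral hypotheses bundled. -/
structure SpecHyp {E : Type*} [NormedAddCommGroup E] [InnerProductSpace ℝ E]
    (lam : ℕ → ℝ) (ζ : ℕ → E) : Prop where
  mono : Monotone lam
  nonneg : ∀ k, 0 ≤ lam k
  on : ∀ j k, ⟪ζ j, ζ k⟫_ℝ = if j = k then 1 + lam k else 0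
  dense : (Submodule.span ℝ (Set.range ζ)).topologicalClosure = ⊤

namespace SpecHyp

variable {E : Type*} [NormedAddCommGroup E] [InnerProductSpace ℝ E] [CompleteSpace E]
  {lam : ℕ → ℝ} {ζ : ℕ → E}

lemma pos (S : SpecHyp lam ζ) (k : ℕ) : 0 < 1 + lam k := by linarith [S.nonneg k]

lemma exists_basis (S : SpecHyp lam ζ) :
    ∃ b : HilbertBasis ℕ ℝ E, ∀ k, b k = (Real.sqrt (1 + lam k))⁻¹ • ζ k := by
  have hs : ∀ k, Real.sqrt (1 + lam k) ≠ 0 := fun k => (Real.sqrt_pos.2 (S.pos k)).ne'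
  have ho : Orthonormal ℝ (fun k => (Real.sqrt (1 + lam k))⁻¹ • ζ k) := by
    rw [orthonormal_iff_ite]
    intro i j
    rw [real_inner_smul_left, real_inner_smul_right, S.on]
    split_ifs with h
    · subst h
      have := Real.mul_self_sqrt (S.pos i).le
      have h2 := hs i
      field_simp
      nlinarith
    · simp
  have hsp : ⊤ ≤ (Submodule.span ℝ
      (Set.range (fun k => (Real.sqrt (1 + lam k))⁻¹ • ζ k))).topologicalClosure := by
    rw [← S.dense]
    apply Submodule.topologicalClosure_mono
    rw [Submodule.span_le]
    rintro _ ⟨k, rfl⟩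
    have h1 : ζ k = Real.sqrt (1 + lam k) • ((Real.sqrt (1 + lam k))⁻¹ • ζ k) := by
      rw [smul_inv_smul₀ (hs k)]
    rw [h1]
    exact Submodule.smul_mem _ _ (Submodule.subset_span ⟨k, rfl⟩)
  exact ⟨HilbertBasis.mk ho hsp, fun k => by rw [HilbertBasis.coe_mk]⟩

lemma hasSum_inner (S : SpecHyp lam ζ) (u v : E) :
    HasSum (fun k => (1 + lam k) * (coefH lam ζ u k * coefH lam ζ v k)) ⟪u, v⟫_ℝ := by
  obtain ⟨b, hb⟩ := S.exists_basis
  have h := b.hasSum_inner_mul_inner u v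
  have e : (fun k => (1 + lam k) * (coefH lam ζ u k * coefH lam ζ v k)) =
      fun i => ⟪u, b i⟫_ℝ * ⟪b i, v⟫_ℝ := by
    funext k
    rw [hb, real_inner_smul_right, real_inner_smul_left, coefH, coefH, real_inner_comm v (ζ k)]
    have h1 := S.pos k
    have h2 : (Real.sqrt (1 + lam k))⁻¹ * (Real.sqrt (1 + lam k))⁻¹ = (1 + lam k)⁻¹ := by
      rw [← mul_inv, Real.mul_self_sqrt h1.le]
    calc _ = (1 + lam k)⁻¹ * (⟪u, ζ k⟫_ℝ * ⟪v, ζ k⟫_ℝ) := by field_simp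
      _ = _ := by rw [← h2]; ring
  rw [e]
  exact h

lemma summable (S : SpecHyp lam ζ) (u v : E) :
    Summable (fun k => coefH lam ζ u k * coefH lam ζ v k) := by
  refine Summable.of_norm_bounded (S.hasSum_inner u v).summable.norm fun k => ?_
  rw [norm_mul (1 + lam k), Real.norm_of_nonneg (S.pos k).le]
  have := S.nonneg k
  have h2 := norm_nonneg (coefH lam ζ u k * coefH lam ζ v k)
  nlinarith

/-- The `H`-inner product as a bilinear map. -/
noncomputable def hl (S : SpecHyp lam ζ) : E →ₗ[ℝ] E →ₗ[ℝ] ℝ :=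
  LinearMap.mk₂ ℝ (fun u v => ∑' k, coefH lam ζ u k * coefH lam ζ v k)
    (fun u u' v => by
      rw [← (S.summable u v).tsum_add (S.summable u' v)]
      congr 1; funext k
      simp only [coefH, inner_add_left]; ring)
    (fun c u v => by
      rw [smul_eq_mul, ← tsum_mul_left]
      congr 1; funext k
      simp only [coefH, real_inner_smul_left]; ring)
    (fun u v v' => by
      rw [← (S.summable u v).tsum_add (S.summable u v')]
      congr 1; funext k
      simp only [coefH, inner_add_left]; ring)
    (fun c u v => by
      rw [smul_eq_mul, ← tsum_mul_left]
      congr 1; funext k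
      simp only [coefH, real_inner_smul_left]; ring)

lemma hl_apply (S : SpecHyp lam ζ) (u v : E) :
    S.hl u v = ∑' k, coefH lam ζ u k * coefH lam ζ v k := rfl

lemma hl_nonneg (S : SpecHyp lam ζ) (u : E) : 0 ≤ S.hl u u := by
  rw [hl_apply]
  exact tsum_nonneg fun k => mul_self_nonneg _

lemma hl_symm (S : SpecHyp lam ζ) (u v : E) : S.hl u v = S.hl v u := by
  rw [hl_apply, hl_apply]
  congr 1; funext k; ring

lemma hl_le (S : SpecHyp lam ζ) (u : E) : S.hl u u ≤ ‖u‖ ^ 2 := by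
  rw [← real_inner_self_eq_norm_sq, hl_apply]
  refine hasSum_le (fun k => ?_) (S.summable u u).hasSum (S.hasSum_inner u u)
  have := S.nonneg k
  nlinarith [mul_self_nonneg (coefH lam ζ u k)]

lemma hl_bound (S : SpecHyp lam ζ) (u v : E) : ‖S.hl u v‖ ≤ 1 * ‖u‖ * ‖v‖ := by
  have hcs : S.hl u v * S.hl v u ≤ S.hl u u * S.hl v v :=
    LinearMap.BilinForm.apply_mul_apply_le_of_forall_zero_le S.hl S.hl_nonneg u v
  rw [S.hl_symm v u] at hcs
  have h1 := mul_le_mul (S.hl_le u) (S.hl_le v) (S.hl_nonneg v) (sq_nonneg _)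
  rw [one_mul, Real.norm_eq_abs]
  apply abs_le_of_sq_le_sq _ (by positivity)
  nlinarith

/-- The `H`-inner product as a continuous bilinear map. -/
noncomputable def hc (S : SpecHyp lam ζ) : E →L[ℝ] E →L[ℝ] ℝ :=
  S.hl.mkContinuous₂ 1 S.hl_bound

lemma hc_apply (S : SpecHyp lam ζ) (u v : E) :
    S.hc u v = ∑' k, coefH lam ζ u k * coefH lam ζ v k := rfl

lemma hasSum_q (S : SpecHyp lam ζ) (l : ℝ) (u v : E) :
    HasSum (fun k => (lam k - l) * (coefH lam ζ u k * coefH lam ζ v k))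
      (⟪u, v⟫_ℝ - (1 + l) * S.hc u v) := by
  have := (S.hasSum_inner u v).sub ((S.summable u v).hasSum.mul_left (1 + l))
  have e : (fun k => (lam k - l) * (coefH lam ζ u k * coefH lam ζ v k)) =
      fun k => (1 + lam k) * (coefH lam ζ u k * coefH lam ζ v k) -
        (1 + l) * (coefH lam ζ u k * coefH lam ζ v k) := by
    funext k; ring
  rw [e]
  exact this

lemma coef_perp (S : SpecHyp lam ζ) {n : ℕ} {w : E} (hw : w ∈ (Esub ζ n)ᗮ) {k : ℕ}
    (hk : k ≤ n) : coefH lam ζ w k = 0 := by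
  have hm : ζ k ∈ Esub ζ n := Submodule.subset_span ⟨k, hk, rfl⟩
  have : ⟪w, ζ k⟫_ℝ = 0 := Submodule.inner_left_of_mem_orthogonal hm hw
  rw [coefH, this, zero_div]

lemma coef_mem (S : SpecHyp lam ζ) {n : ℕ} {v : E} (hv : v ∈ Esub ζ n) {k : ℕ}
    (hk : n < k) : coefH lam ζ v k = 0 := by
  have : ⟪v, ζ k⟫_ℝ = 0 := by
    rw [Esub] at hv
    induction hv using Submodule.span_induction with
    | mem x hx =>
      obtain ⟨j, hj, rfl⟩ := hx
      have hj' : j ≤ n := hj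
      rw [S.on, if_neg (by omega)]
    | zero => simp
    | add x y _ _ h1 h2 => rw [inner_add_left, h1, h2, add_zero]
    | smul a x _ h => rw [real_inner_smul_left, h, mul_zero]
  rw [coefH, this, zero_div]

lemma gap (S : SpecHyp lam ζ) (n : ℕ) (l : ℝ) (hl : l ∈ Ioo (lam n) (lam (n + 1))) :
    ∃ δ : ℝ, 0 < δ ∧
    (∀ w ∈ (Esub ζ n)ᗮ, δ * ‖w‖ ^ 2 ≤ ‖w‖ ^ 2 - (1 + l) * S.hc w w) ∧
    (∀ v ∈ Esub ζ n, ‖v‖ ^ 2 - (1 + l) * S.hc v v ≤ - (δ * ‖v‖ ^ 2)) := by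
  obtain ⟨h1, h2⟩ := hl
  have p1 := S.pos (n + 1)
  have p0 := S.pos n
  have hl0 : 0 < 1 + l := by linarith
  refine ⟨min ((lam (n + 1) - l) / (1 + lam (n + 1))) ((l - lam n) / (1 + lam n)), ?_, ?_, ?_⟩
  · exact lt_min (div_pos (by linarith) p1) (div_pos (by linarith) p0)
  · intro w hw
    set δ := min ((lam (n + 1) - l) / (1 + lam (n + 1))) ((l - lam n) / (1 + lam n))
    have hδ : δ ≤ (lam (n + 1) - l) / (1 + lam (n + 1)) := min_le_left _ _
    rw [le_div_iff₀ p1] at hδ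
    rw [← real_inner_self_eq_norm_sq]
    refine hasSum_le (fun k => ?_) ((S.hasSum_inner w w).mul_left δ) (S.hasSum_q l w w)
    rcases le_or_gt k n with hk | hk
    · simp [S.coef_perp hw hk]
    · have h3 := S.mono (show n + 1 ≤ k from hk)
      have h4 : δ * (1 + lam k) ≤ lam k - l := by
        have h5 : δ ≤ 1 := by
          by_contra! h
          nlinarith
        nlinarith
      have := mul_le_mul_of_nonneg_right h4 (mul_self_nonneg (coefH lam ζ w k))
      linarith
  · intro v hv
    set δ := min ((lam (n + 1) - l) / (1 + lam (n + 1))) ((l - lam n) / (1 + lam n))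
    have hδ : δ ≤ (l - lam n) / (1 + lam n) := min_le_right _ _
    have hδ0 : 0 < δ := lt_min (div_pos (by linarith) p1) (div_pos (by linarith) p0)
    rw [le_div_iff₀ p0] at hδ
    rw [← real_inner_self_eq_norm_sq]
    refine hasSum_le (fun k => ?_) (S.hasSum_q l v v) ((S.hasSum_inner v v).mul_left δ).neg
    rcases le_or_gt k n with hk | hk
    · have h3 := S.mono hk
      have h4 : δ * (1 + lam k) ≤ l - lam k := by nlinarith
      have := mul_le_mul_of_nonneg_right h4 (mul_self_nonneg (coefH lam ζ v k))
      linarith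
    · simp [S.coef_mem hv hk]

lemma ws (S : SpecHyp lam ζ) (x : ℕ → E) (M : ℝ) (hM : ∀ j, ‖x j‖ ≤ M) :
    ∃ (φ : ℕ → ℕ) (y : E), StrictMono φ ∧ WConv (x ∘ φ) y := by
  have hsep : TopologicalSpace.SeparableSpace E := by
    have h1 : TopologicalSpace.IsSeparable (Set.range ζ) := (Set.countable_range ζ).isSeparable
    have h2 := h1.span (R := ℝ)
    have h3 := h2.closure
    rw [← Submodule.topologicalClosure_coe, S.dense] at h3
    exact TopologicalSpace.isSeparable_univ_iff.1 h3
  have hc := WeakDual.isSeqCompact_closedBall ℝ E 0 M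
  obtain ⟨f, -, φ, hφ, hf⟩ := hc (x := fun j => StrongDual.toWeakDual (InnerProductSpace.toDual ℝ E (x j)))
    (fun j => by simpa using hM j)
  refine ⟨φ, (InnerProductSpace.toDual ℝ E).symm (WeakDual.toStrongDual f), hφ, ?_⟩
  intro ψ
  have h1 := ((WeakDual.eval_continuous ((InnerProductSpace.toDual ℝ E).symm ψ)).tendsto f).comp hf
  have e1 : ∀ y : E, ψ y = ⟪y, (InnerProductSpace.toDual ℝ E).symm ψ⟫_ℝ := by
    intro y
    rw [real_inner_comm, InnerProductSpace.toDual_symm_apply]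
  simp only [e1, InnerProductSpace.toDual_symm_apply]
  exact h1

lemma e_not_mem (S : SpecHyp lam ζ) (n : ℕ) : ζ (n + 1) ∉ Esub ζ n := by
  intro h
  have h1 := S.coef_mem h (Nat.lt_succ_self n)
  have := S.pos (n + 1)
  rw [coefH, S.on, if_pos rfl, div_self this.ne'] at h1
  exact one_ne_zero h1

lemma finE (n : ℕ) : FiniteDimensional ℝ (Esub ζ n) :=
  FiniteDimensional.span_of_finite ℝ ((Set.finite_le_nat n).image ζ)

lemma horth (S : SpecHyp lam ζ) (n : ℕ) : ∀ v ∈ Esub ζ n, ∀ w ∈ (Esub ζ n)ᗮ, S.hc v w = 0 := by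
  intro v hv w hw
  rw [hc_apply]
  convert tsum_zero with k
  rcases le_or_gt k n with hk | hk
  · rw [S.coef_perp hw hk, mul_zero]
  · rw [S.coef_mem hv hk, zero_mul]

end SpecHyp

lemma Jfun_eq_aux {E : Type*} [NormedAddCommGroup E] [InnerProductSpace ℝ E] [CompleteSpace E]
    {lam : ℕ → ℝ} {ζ : ℕ → E} (S : SpecHyp lam ζ) (l : ℝ) (u v : E) :
    qForm lam ζ l u v = ⟪u, v⟫_ℝ - (1 + l) * S.hc u v :=
  (S.hasSum_q l u v).tsum_eq

lemma normHsq_eq_aux {E : Type*} [NormedAddCommGroup E] [InnerProductSpace ℝ E] [CompleteSpace E]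
    {lam : ℕ → ℝ} {ζ : ℕ → E} (S : SpecHyp lam ζ) (u : E) :
    normHsq lam ζ u = S.hc u u := by
  rw [normHsq, S.hc_apply]
  congr 1; funext k; ring

/-- Continuity of `λ ↦ c_λ` on the spectral gap, together with the
one-sided derivative bounds
`limsup_{ε→0⁺} (c_{λ−ε} − c_λ)/ε ≤ inf {‖u‖_H²/2 : u ∈ Q_λ}` and
`sup {‖u‖_H²/2 : u ∈ Q_λ} ≤ liminf_{ε→0⁺} (c_λ − c_{λ+ε})/ε`. -/
theorem clevel_continuity_and_derivative_bounds {E : Type*} [NormedAddCommGroup E]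
    [InnerProductSpace ℝ E] [CompleteSpace E]
    (lam : ℕ → ℝ) (ζ : ℕ → E)
    (hlam_mono : Monotone lam) (hlam_nonneg : ∀ k, 0 ≤ lam k)
    (hlam_top : Tendsto lam atTop atTop)
    (hON : ∀ j k, ⟪ζ j, ζ k⟫_ℝ = if j = k then 1 + lam k else 0)
    (hdense : (Submodule.span ℝ (Set.range ζ)).topologicalClosure = ⊤)
    (I : E → ℝ) (I' : E → E →L[ℝ] ℝ)
    (hIderiv : ∀ u, HasFDerivAt I (I' u) u) (hIderiv_cont : Continuous I')
    (hI1 : ∀ (u : ℕ → E) (a : E),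
      (∀ φ : E →L[ℝ] ℝ, Tendsto (fun j => φ (u j)) atTop (𝓝 (φ a))) →
      Tendsto (fun j => I (u j)) atTop (𝓝 (I a)))
    (hI2 : I 0 = 0 ∧ ∀ u : E, u ≠ 0 → 0 < I u)
    (hI3mono : ∀ u : E, u ≠ 0 → MonotoneOn (fun t : ℝ => I (t • u) / t ^ 2) (Ioi 0))
    (hI3zero : ∀ u : E, u ≠ 0 → Tendsto (fun t : ℝ => I (t • u) / t ^ 2) (𝓝[>] 0) (𝓝 0))
    (hI3top : ∀ u : E, u ≠ 0 → Tendsto (fun t : ℝ => I (t • u) / t ^ 2) atTop atTop)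
    (hI4 : ∀ u : E, u ≠ 0 → ∀ v : E, ∀ s : ℝ, -1 ≤ s →
      I u - I ((1 + s) • u + v) + I' u ((s * (s / 2 + 1)) • u + (1 + s) • v) ≤ 0)
    (hI4strict : ∀ u : E, u ≠ 0 → ∀ s : ℝ, -1 ≤ s → s ≠ 0 →
      I u - I ((1 + s) • u) + I' u ((s * (s / 2 + 1)) • u) < 0)
    (n : ℕ)
    (hgap : lam n < lam (n + 1)) :
    ContinuousOn (fun lambda => clevel lam ζ I I' n lambda)
      (Ioo (lam n) (lam (n + 1))) ∧
    ∀ lambda ∈ Ioo (lam n) (lam (n + 1)),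
      Filter.limsup
          (fun ε : ℝ => (clevel lam ζ I I' n (lambda - ε) - clevel lam ζ I I' n lambda) / ε)
          (𝓝[>] 0) ≤
        sInf {m : ℝ | ∃ u ∈ Qset lam ζ I I' n lambda, m = normHsq lam ζ u / 2} ∧
      sSup {m : ℝ | ∃ u ∈ Qset lam ζ I I' n lambda, m = normHsq lam ζ u / 2} ≤
        Filter.liminf
          (fun ε : ℝ => (clevel lam ζ I I' n lambda - clevel lam ζ I I' n (lambda + ε)) / ε)
          (𝓝[>] 0) := by
  have S : SpecHyp lam ζ := ⟨hlam_mono, hlam_nonneg, hON, hdense⟩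
  obtain ⟨C, hCW, hCa, hCb, hCI, hCI', hCh⟩ : ∃ C : Ctx E, C.W = Esub ζ n ∧ C.a = lam n ∧
      C.b = lam (n + 1) ∧ C.I = I ∧ C.I' = I' ∧ C.h = S.hc :=
    ⟨{ h := S.hc
       hsymm := S.hl_symm
       hnonneg := S.hl_nonneg
       hle := S.hl_le
       W := Esub ζ n
       fin := SpecHyp.finE n
       horth := S.horth n
       a := lam n
       b := lam (n + 1)
       gap := S.gap n
       e := ζ (n + 1)
       he := S.e_not_mem n
       ws := S.ws
       I := I
       I' := I'
       hd := hIderiv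
       I1 := hI1
       I0 := hI2.1
       Ipos := hI2.2
       Imono := hI3mono
       Izero := hI3zero
       Itop := hI3top
       I4 := hI4
       I4s := hI4strict }, rfl, rfl, rfl, rfl, rfl, rfl⟩
  have hq : ∀ l u v, qForm lam ζ l u v = C.B l u v := by
    intro l u v
    rw [Jfun_eq_aux S, Ctx.B_apply, hCh]
  have hJ : ∀ l, Jfun lam ζ I l = C.J l := by
    intro l
    funext u
    rw [Jfun, Ctx.J, hq, hCI]
  have hNP : ∀ l, NehariPankov lam ζ I' n l = C.NP l := by
    intro l
    ext u
    constructor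
    · rintro ⟨h1, h2⟩
      refine ⟨by rwa [hCW], ?_, ?_⟩
      · intro v hv
        rw [hCW] at hv
        have h3 := h2 v (Submodule.mem_sup_left hv)
        rw [Jderiv, hq] at h3
        rw [hCI']
        linarith
      · have h3 := h2 u (Submodule.mem_sup_right (Submodule.mem_span_singleton_self u))
        rw [Jderiv, hq] at h3
        rw [hCI']
        linarith
    · rintro ⟨h1, h2, h3⟩
      rw [hCW] at h1 h2
      rw [hCI'] at h2 h3
      refine ⟨h1, ?_⟩
      intro w hw
      obtain ⟨v, hv, z, hz, rfl⟩ := Submodule.mem_sup.1 hw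
      obtain ⟨r, rfl⟩ := Submodule.mem_span_singleton.1 hz
      rw [Jderiv, hq, map_add, map_add, map_smul, map_smul, h2 v hv, h3]
      ring
  have hc : ∀ l, clevel lam ζ I I' n l = C.c l := by
    intro l
    rw [clevel, Ctx.c, hJ, hNP]
  have hQ : ∀ l u, u ∈ Qset lam ζ I I' n l ↔ u ∈ C.NP l ∧ C.J l u = C.c l := by
    intro l u
    rw [← hNP, ← hJ, ← hc]
    rfl
  simp only [hc]
  rw [← hCa, ← hCb]
  refine ⟨fun l hl => (C.c_cont hl).continuousWithinAt, ?_⟩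
  intro l hl
  obtain ⟨u0, hu0, hu0c⟩ := C.exists_min hl
  have hne : {m : ℝ | ∃ u ∈ Qset lam ζ I I' n l, m = normHsq lam ζ u / 2}.Nonempty :=
    ⟨_, u0, (hQ l u0).2 ⟨hu0, hu0c⟩, rfl⟩
  constructor
  · apply le_csInf hne
    rintro m ⟨u, hu, rfl⟩
    obtain ⟨h1, h2⟩ := (hQ l u).1 hu
    rw [normHsq_eq_aux S, ← hCh]
    exact C.limsup_bound hl h1 h2
  · apply csSup_le hne
    rintro m ⟨u, hu, rfl⟩
    obtain ⟨h1, h2⟩ := (hQ l u).1 hu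
    rw [normHsq_eq_aux S, ← hCh]
    exact C.liminf_bound hl h1 h2
end
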